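/- arXiv:0912.3568 — 4 statements merged into one kernel-verified Lean document; each statement's English description precedes it below -/
import Mathlib

section
/- (Large coupling limit of the Prüfer amplitude) Let g : ℝ → ℝ be bounded and measurable, let [a, b] ⊆ [−1, 0] with a < b, and let f : ℝ → ℝ be measurable with 0 ≤ f(x) ≤ C for all x and some constant C < ∞, f(x) > 0 for almost every x ∈ [a, b], and f(x) = 0 for all x ∉ [a, b]. Fix β ∈ ℝ, and for each λ ∈ ℝ let (u_λ, v_λ) be the solution of −u″ + (g + λ·f)·u = 0 with u_λ(−1) = sin β and v_λ(−1) = cos β. Then u_λ(0)² + v_λ(0)² → ∞ as λ → ∞; equivalently, the Prüfer amplitude at 0 satisfies R(0, λ) = (u_λ(0)² + v_λ(0)²)^{1/2} → ∞ as λ → ∞. -/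
open MeasureTheory Filter

/-!
Multiplying `u'' = (g + λ f) u` by `u` and integrating over `[a, b]` bounds
`∫ v² + λ ∫ f u²` by the amplitude `u² + v²` at the two ends, up to a multiple of `sup u²`. Since
`f > 0` almost everywhere, for large `λ` this form controls `sup u²` with an arbitrarily small
constant, so `u` tends to `0` uniformly on `[a, b]` along any `λ → ∞` for which both end
amplitudes stay bounded. The data at `a` are nonzero and do not depend on `λ`, because `f` vanishes
to the left of `a`. If `u a ≠ 0` this is a contradiction at once. If `u a = 0`, then, `-|g|` being
a lower bound of the potential, `|u|` grows at least linearly with slope about `|v a|` as long as it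
is small, a contradiction again. Hence the amplitude at `b` tends to infinity, and Gronwall's
inequality carries this to the right of `b`.
-/

/-! ### Absolute continuity and Gronwall's inequality -/

section AbsolutelyContinuous

variable {a b : ℝ}

lemma lipschitzOnWith_comp_absolutelyContinuousOnInterval {X Y : Type*} [PseudoMetricSpace X]
    [PseudoMetricSpace Y] {K : NNReal} {φ : X → Y} {f : ℝ → X}
    (hφ : LipschitzOnWith K φ (f '' Set.uIcc a b)) (hf : AbsolutelyContinuousOnInterval f a b) :
    AbsolutelyContinuousOnInterval (fun x => φ (f x)) a b := by
  have hlim := Tendsto.const_mul (K : ℝ) hf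
  rw [mul_zero] at hlim
  refine squeeze_zero' (.of_forall fun E => Finset.sum_nonneg fun i _ => dist_nonneg) ?_ hlim
  filter_upwards [mem_inf_of_right (mem_principal_self _)] with E hE
  rw [Finset.mul_sum]
  exact Finset.sum_le_sum fun i hi => hφ.dist_le_mul _ (Set.mem_image_of_mem f (hE.1 i hi).1) _
    (Set.mem_image_of_mem f (hE.1 i hi).2)

lemma absolutelyContinuousOnInterval_exp {f : ℝ → ℝ} (hf : AbsolutelyContinuousOnInterval f a b) :
    AbsolutelyContinuousOnInterval (fun x => Real.exp (f x)) a b := by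
  have hexp : LocallyLipschitz Real.exp := Real.contDiff_exp.locallyLipschitz
  obtain ⟨K, hK⟩ := hexp.locallyLipschitzOn.exists_lipschitzOnWith_of_compact
    (isCompact_uIcc.image_of_continuousOn hf.continuousOn)
  exact lipschitzOnWith_comp_absolutelyContinuousOnInterval hK hf

lemma le_mul_exp_integral_of_deriv_le {φ k : ℝ → ℝ} (hab : a ≤ b)
    (hφ : AbsolutelyContinuousOnInterval φ a b) (hk : IntervalIntegrable k volume a b)
    (hle : ∀ᵐ x, x ∈ Set.Icc a b → deriv φ x ≤ k x * φ x) :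
    φ b ≤ φ a * Real.exp (∫ t in a..b, k t) := by
  let P : ℝ → ℝ := fun x => φ x * Real.exp (-∫ t in a..x, k t)
  have hP : AbsolutelyContinuousOnInterval P a b :=
    hφ.mul (absolutelyContinuousOnInterval_exp
      (hk.absolutelyContinuousOnInterval_intervalIntegral Set.left_mem_uIcc).neg)
  have hderiv : ∀ᵐ x, x ∈ Set.Icc a b → deriv P x ≤ 0 := by
    filter_upwards [hle, hφ.ae_differentiableAt, hk.ae_hasDerivAt_integral] with x hx hφx hkx hxab
    rw [← Set.uIcc_of_le hab] at hxab
    have hPx : HasDerivAt P _ x := (hφx hxab).hasDerivAt.mul (hkx hxab a Set.left_mem_uIcc).neg.exp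
    calc deriv P x = (deriv φ x - k x * φ x) * Real.exp (-∫ t in a..x, k t) := by
          rw [hPx.deriv, Pi.neg_apply]
          ring
      _ ≤ 0 := mul_nonpos_of_nonpos_of_nonneg
          (sub_nonpos.2 (hx (Set.uIcc_of_le hab ▸ hxab))) (Real.exp_nonneg _)
  have hPab : P b ≤ P a := by
    rw [← sub_nonpos, ← hP.integral_deriv_eq_sub]
    simpa using intervalIntegral.integral_mono_ae_restrict hab hP.intervalIntegrable_deriv
      intervalIntegrable_const ((ae_restrict_iff' measurableSet_Icc).2 hderiv)
  simpa [P, Real.exp_neg, ← div_eq_mul_inv, div_le_iff₀ (Real.exp_pos _)] using hPab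

lemma mul_exp_integral_le_of_le_deriv {φ k : ℝ → ℝ} (hab : a ≤ b)
    (hφ : AbsolutelyContinuousOnInterval φ a b) (hk : IntervalIntegrable k volume a b)
    (hle : ∀ᵐ x, x ∈ Set.Icc a b → k x * φ x ≤ deriv φ x) :
    φ a * Real.exp (∫ t in a..b, k t) ≤ φ b := by
  have hneg := le_mul_exp_integral_of_deriv_le hab hφ.neg hk (by
    filter_upwards [hle] with x hx hxab
    rw [deriv.neg, Pi.neg_apply]
    linarith [hx hxab])
  simpa only [Pi.neg_apply, neg_mul, neg_le_neg_iff] using hneg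

end AbsolutelyContinuous

/-! ### Pointwise bounds by weighted Dirichlet integrals -/

lemma intervalIntegrable_of_locallyIntegrable {E : Type*} [NormedAddCommGroup E] {f : ℝ → E}
    {μ : Measure ℝ} (hf : LocallyIntegrable f μ) (a b : ℝ) : IntervalIntegrable f μ a b :=
  (hf.integrableOn_isCompact isCompact_uIcc).intervalIntegrable

lemma locallyIntegrable_of_abs_le {f : ℝ → ℝ} (hf : Measurable f) {C : ℝ} (hC : ∀ x, |f x| ≤ C) :
    LocallyIntegrable f :=
  (locallyIntegrable_const C).mono hf.aestronglyMeasurable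
    (.of_forall fun x => (hC x).trans (le_abs_self C))

lemma sq_integral_le_sub_mul_integral_sq {f : ℝ → ℝ} {a b : ℝ} (hab : a ≤ b)
    (hf : IntervalIntegrable f volume a b)
    (hf2 : IntervalIntegrable (fun t => f t ^ 2) volume a b) :
    (∫ t in a..b, f t) ^ 2 ≤ (b - a) * ∫ t in a..b, f t ^ 2 := by
  rcases hab.eq_or_lt with rfl | hlt
  · simp
  have hjensen : (⨍ t in a..b, f t) ^ 2 ≤ ⨍ t in a..b, f t ^ 2 := by
    rw [Set.uIoc_of_le hab]
    exact even_two.convexOn_pow.map_set_average_le (continuous_pow 2).continuousOn isClosed_univ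
      (by simp [hlt]) (by simp) (by simp) hf.1 hf2.1
  have hpos : 0 < b - a := sub_pos.2 hlt
  rw [interval_average_eq, interval_average_eq, smul_eq_mul, smul_eq_mul, mul_pow,
    ← mul_le_mul_iff_right₀ (pow_pos hpos 2)] at hjensen
  field_simp at hjensen
  linarith

lemma sq_sub_le_sub_mul_integral_sq {u v : ℝ → ℝ} (hu : ∀ x, HasDerivAt u (v x) x)
    (hv : Continuous v) {a b x y : ℝ} (hx : x ∈ Set.Icc a b) (hy : y ∈ Set.Icc a b) :
    (u x - u y) ^ 2 ≤ (b - a) * ∫ t in a..b, v t ^ 2 := by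
  wlog hyx : y ≤ x generalizing x y
  · rw [sub_sq_comm]
    exact this hy hx (le_of_not_ge hyx)
  have hv2 : Continuous fun t => v t ^ 2 := hv.pow 2
  calc (u x - u y) ^ 2 = (∫ t in y..x, v t) ^ 2 := by
        rw [intervalIntegral.integral_eq_sub_of_hasDerivAt (fun t _ => hu t)
          (hv.intervalIntegrable _ _)]
    _ ≤ (x - y) * ∫ t in y..x, v t ^ 2 := sq_integral_le_sub_mul_integral_sq hyx
        (hv.intervalIntegrable _ _) (hv2.intervalIntegrable _ _)
    _ ≤ (b - a) * ∫ t in a..b, v t ^ 2 := by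
        refine mul_le_mul (sub_le_sub hx.2 hy.1) ?_
          (intervalIntegral.integral_nonneg hyx fun t _ => sq_nonneg _)
          (sub_nonneg.2 (hx.1.trans hx.2))
        exact intervalIntegral.integral_mono_interval hy.1 hyx hx.2
          (.of_forall fun t => sq_nonneg _) (hv2.intervalIntegrable _ _)

lemma sq_mul_integral_le {u v f : ℝ → ℝ} (hu : ∀ x, HasDerivAt u (v x) x) (hv : Continuous v)
    {a b x : ℝ} (hf : IntervalIntegrable f volume a b) (hf_nonneg : ∀ᵐ t, t ∈ Set.Icc a b → 0 ≤ f t)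
    (hx : x ∈ Set.Icc a b) :
    u x ^ 2 * ∫ t in a..b, f t ≤
      2 * (∫ t in a..b, f t * u t ^ 2) +
        2 * (b - a) * (∫ t in a..b, v t ^ 2) * ∫ t in a..b, f t := by
  have hab : a ≤ b := hx.1.trans hx.2
  have hu_cont : Continuous u := continuous_iff_continuousAt.2 fun t => (hu t).continuousAt
  have hfu : IntervalIntegrable (fun t => f t * u t ^ 2) volume a b :=
    hf.mul_continuousOn (hu_cont.pow 2).continuousOn
  have hosc : ∀ t ∈ Set.Icc a b, u x ^ 2 ≤ 2 * u t ^ 2 + 2 * (b - a) * ∫ s in a..b, v s ^ 2 :=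
    fun t ht => by
      linarith [sq_sub_le_sub_mul_integral_sq hu hv hx ht, sq_nonneg (u x - 2 * u t)]
  have hmono : ∫ t in a..b, u x ^ 2 * f t ≤
      ∫ t in a..b, (2 * (f t * u t ^ 2) + 2 * (b - a) * (∫ s in a..b, v s ^ 2) * f t) := by
    refine intervalIntegral.integral_mono_ae_restrict hab (hf.const_mul _)
      ((hfu.const_mul 2).add (hf.const_mul _)) ((ae_restrict_iff' measurableSet_Icc).2 ?_)
    filter_upwards [hf_nonneg] with t hft ht
    linarith [mul_le_mul_of_nonneg_right (hosc t ht) (hft ht)]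
  rwa [intervalIntegral.integral_add (hfu.const_mul 2) (hf.const_mul _),
    intervalIntegral.integral_const_mul, intervalIntegral.integral_const_mul,
    intervalIntegral.integral_const_mul] at hmono

lemma integral_pos_of_ae_pos {f : ℝ → ℝ} {a b : ℝ} (hab : a < b)
    (hf : IntervalIntegrable f volume a b) (hf_pos : ∀ᵐ t, t ∈ Set.Icc a b → 0 < f t) :
    0 < ∫ t in a..b, f t := by
  have hpos : ∀ᵐ t, t ∈ Set.Ioc a b → 0 < f t :=
    hf_pos.mono fun t ht h => ht (Set.Ioc_subset_Icc_self h)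
  have hnonneg : 0 ≤ᵐ[volume.restrict (Set.uIoc a b)] f := by
    rw [Set.uIoc_of_le hab.le]
    exact (ae_restrict_iff' measurableSet_Ioc).2 (hpos.mono fun t ht h => (ht h).le)
  refine (intervalIntegral.integral_pos_iff_support_of_nonneg_ae' hnonneg hf).2 ⟨hab, ?_⟩
  calc 0 < volume (Set.Ioc a b) := by simpa only [Real.volume_Ioc, ENNReal.ofReal_pos, sub_pos]
    _ ≤ volume (Function.support f ∩ Set.Ioc a b) :=
      measure_mono_ae (hpos.mono fun t ht h => ⟨(ht h).ne', h⟩)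

lemma exists_pos_forall_le_integral {f : ℝ → ℝ} (hf : LocallyIntegrable f) {a b δ : ℝ}
    (hf_pos : ∀ᵐ t, t ∈ Set.Icc a b → 0 < f t) (hδ : 0 < δ) (hδab : δ ≤ b - a) :
    ∃ κ > 0, ∀ p ∈ Set.Icc a (b - δ), κ ≤ ∫ t in p..p + δ, f t := by
  have hint := intervalIntegrable_of_locallyIntegrable hf
  have hcont : Continuous fun p => ∫ t in p..p + δ, f t := by
    have hprim : Continuous fun p => ∫ t in a..p, f t :=
      intervalIntegral.continuous_primitive hint a
    have hdiff : Continuous fun p => (∫ t in a..p + δ, f t) - ∫ t in a..p, f t :=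
      (hprim.comp (continuous_add_const δ)).sub hprim
    simpa only [intervalIntegral.integral_interval_sub_left (hint _ _) (hint _ _)] using hdiff
  obtain ⟨p₀, hp₀, hmin⟩ := isCompact_Icc.exists_isMinOn
    (Set.nonempty_Icc.2 (le_sub_comm.1 hδab)) hcont.continuousOn
  refine ⟨∫ t in p₀..p₀ + δ, f t, ?_, fun p hp => hmin hp⟩
  exact integral_pos_of_ae_pos (lt_add_of_pos_right p₀ hδ) (hint _ _)
    (hf_pos.mono fun t ht h => ht ⟨hp₀.1.trans h.1, h.2.trans (le_sub_iff_add_le.1 hp₀.2)⟩)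

lemma sq_mul_integral_subinterval_le {u v f : ℝ → ℝ} (hu : ∀ x, HasDerivAt u (v x) x)
    (hv : Continuous v) {a b p r x : ℝ} (hf : IntervalIntegrable f volume a b)
    (hf_nonneg : ∀ᵐ t, t ∈ Set.Icc a b → 0 ≤ f t) (hap : a ≤ p) (hrb : r ≤ b)
    (hx : x ∈ Set.Icc p r) :
    u x ^ 2 * ∫ t in p..r, f t ≤
      2 * (∫ t in a..b, f t * u t ^ 2) +
        2 * (r - p) * (∫ t in a..b, v t ^ 2) * ∫ t in p..r, f t := by
  have hpr : p ≤ r := hx.1.trans hx.2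
  have hu_cont : Continuous u := continuous_iff_continuousAt.2 fun t => (hu t).continuousAt
  have hf_pr : IntervalIntegrable f volume p r :=
    hf.mono_set (by
      rw [Set.uIcc_of_le hpr, Set.uIcc_of_le (hap.trans (hpr.trans hrb))]
      exact Set.Icc_subset_Icc hap hrb)
  have hf_pr_nonneg : ∀ᵐ t, t ∈ Set.Icc p r → 0 ≤ f t :=
    hf_nonneg.mono fun t ht h => ht ⟨hap.trans h.1, h.2.trans hrb⟩
  have hmass : 0 ≤ ∫ t in p..r, f t :=
    intervalIntegral.integral_nonneg_of_ae_restrict hpr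
      ((ae_restrict_iff' measurableSet_Icc).2 hf_pr_nonneg)
  have hfu : ∫ t in p..r, f t * u t ^ 2 ≤ ∫ t in a..b, f t * u t ^ 2 := by
    refine intervalIntegral.integral_mono_interval hap hpr hrb
      ((ae_restrict_iff' measurableSet_Ioc).2 ?_)
      (hf.mul_continuousOn (hu_cont.pow 2).continuousOn)
    filter_upwards [hf_nonneg] with t ht hmem
    exact mul_nonneg (ht (Set.Ioc_subset_Icc_self hmem)) (sq_nonneg _)
  have hv2 : ∫ t in p..r, v t ^ 2 ≤ ∫ t in a..b, v t ^ 2 :=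
    intervalIntegral.integral_mono_interval hap hpr hrb (.of_forall fun t => sq_nonneg _)
      ((hv.pow 2).intervalIntegrable a b)
  refine (sq_mul_integral_le hu hv hf_pr hf_pr_nonneg hx).trans ?_
  gcongr

lemma exists_mem_Icc_add_of_mem_Icc {a b δ x : ℝ} (hδ : 0 ≤ δ) (hδab : δ ≤ b - a)
    (hx : x ∈ Set.Icc a b) : ∃ p ∈ Set.Icc a (b - δ), x ∈ Set.Icc p (p + δ) :=
  ⟨max a (x - δ), ⟨le_max_left _ _, max_le (le_sub_comm.1 hδab) (sub_le_sub_right hx.2 δ)⟩,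
    max_le hx.1 (sub_le_self x hδ), sub_le_iff_le_add.1 (le_max_right _ _)⟩

lemma eventually_sq_le_mul_dirichlet {f : ℝ → ℝ} (hf : LocallyIntegrable f) {a b ε : ℝ}
    (hf_pos : ∀ᵐ t, t ∈ Set.Icc a b → 0 < f t) (hab : a < b) (hε : 0 < ε) :
    ∀ᶠ lam : ℝ in atTop, ∀ u v : ℝ → ℝ, (∀ x, HasDerivAt u (v x) x) → Continuous v →
      ∀ x ∈ Set.Icc a b,
        u x ^ 2 ≤ ε * ((∫ t in a..b, v t ^ 2) + lam * ∫ t in a..b, f t * u t ^ 2) := by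
  obtain ⟨δ, hδ, hδ_le⟩ : ∃ δ > 0, δ ≤ min (b - a) (ε / 2) :=
    ⟨_, lt_min (sub_pos.2 hab) (half_pos hε), le_rfl⟩
  rw [le_min_iff] at hδ_le
  obtain ⟨κ, hκ, hmass⟩ := exists_pos_forall_le_integral hf hf_pos hδ hδ_le.1
  filter_upwards [eventually_ge_atTop (2 / (κ * ε))] with lam hlam u v hu hv x hx
  obtain ⟨p, hp, hxp⟩ := exists_mem_Icc_add_of_mem_Icc hδ.le hδ_le.1 hx
  have hf_nonneg : ∀ᵐ t, t ∈ Set.Icc a b → 0 ≤ f t := hf_pos.mono fun t ht h => (ht h).le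
  set m := ∫ t in p..p + δ, f t
  set V := ∫ t in a..b, v t ^ 2
  set F := ∫ t in a..b, f t * u t ^ 2
  have hm : κ ≤ m := hmass p hp
  have hm_pos : 0 < m := hκ.trans_le hm
  have hV : 0 ≤ V := intervalIntegral.integral_nonneg hab.le fun t _ => sq_nonneg _
  have hF : 0 ≤ F := intervalIntegral.integral_nonneg_of_ae_restrict hab.le
    ((ae_restrict_iff' measurableSet_Icc).2
      (hf_nonneg.mono fun t ht h => mul_nonneg (ht h) (sq_nonneg _)))
  have hlam_mass : 2 ≤ lam * ε * m := by
    have hlam_nonneg : 0 ≤ lam := hlam.trans' (by positivity)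
    calc 2 ≤ lam * (κ * ε) := (div_le_iff₀ (mul_pos hκ hε)).1 hlam
      _ = lam * ε * κ := by ring
      _ ≤ lam * ε * m := by gcongr
  refine le_of_mul_le_mul_right ?_ hm_pos
  calc u x ^ 2 * m ≤ 2 * F + 2 * (p + δ - p) * V * m :=
        sq_mul_integral_subinterval_le hu hv (intervalIntegrable_of_locallyIntegrable hf a b)
          hf_nonneg hp.1 (le_sub_iff_add_le.1 hp.2) hxp
    _ ≤ lam * ε * m * F + ε * V * m := by gcongr; linarith
    _ = ε * (V + lam * F) * m := by ring

/-! ### Second-order equations in the sense of Carathéodory -/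

/-- `u'' = h` in the sense of Carathéodory, with `v` the first derivative of `u`: an equation
`-u'' + q u = 0` is the case `h = q u`. Local integrability of `h` belongs to the notion because
the integral below is the junk value `0` on an interval where `h` is not integrable. -/
structure HasWeakSecondDeriv (u v h : ℝ → ℝ) : Prop where
  hasDerivAt : ∀ x, HasDerivAt u (v x) x
  locallyIntegrable : LocallyIntegrable h
  eq_add_integral : ∀ x y, v x = v y + ∫ t in y..x, h t

namespace HasWeakSecondDeriv

variable {u v h u₁ v₁ h₁ u₂ v₂ h₂ : ℝ → ℝ} {a b : ℝ}

lemma of_locallyIntegrable {q : ℝ → ℝ} (hq : LocallyIntegrable q)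
    (hu : ∀ x, HasDerivAt u (v x) x) (hv : ∀ x y, v x = v y + ∫ t in y..x, q t * u t) :
    HasWeakSecondDeriv u v (fun t => q t * u t) where
  hasDerivAt := hu
  locallyIntegrable := hq.mul_continuous
    (continuous_iff_continuousAt.2 fun x => (hu x).continuousAt)
  eq_add_integral := hv

lemma neg (hu : HasWeakSecondDeriv u v h) : HasWeakSecondDeriv (-u) (-v) (-h) where
  hasDerivAt x := (hu.hasDerivAt x).neg
  locallyIntegrable := hu.locallyIntegrable.neg
  eq_add_integral x y := by
    simp only [Pi.neg_apply, intervalIntegral.integral_neg, hu.eq_add_integral x y, neg_add]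

lemma sub (hu₁ : HasWeakSecondDeriv u₁ v₁ h₁) (hu₂ : HasWeakSecondDeriv u₂ v₂ h₂) :
    HasWeakSecondDeriv (u₁ - u₂) (v₁ - v₂) (h₁ - h₂) where
  hasDerivAt x := (hu₁.hasDerivAt x).sub (hu₂.hasDerivAt x)
  locallyIntegrable := hu₁.locallyIntegrable.sub hu₂.locallyIntegrable
  eq_add_integral x y := by
    simp only [Pi.sub_apply]
    rw [intervalIntegral.integral_sub
        (intervalIntegrable_of_locallyIntegrable hu₁.locallyIntegrable y x)
        (intervalIntegrable_of_locallyIntegrable hu₂.locallyIntegrable y x),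
      hu₁.eq_add_integral x y, hu₂.eq_add_integral x y]
    ring

lemma continuous (hu : HasWeakSecondDeriv u v h) : Continuous u :=
  continuous_iff_continuousAt.2 fun x => (hu.hasDerivAt x).continuousAt

lemma deriv_eq_add_integral (hu : HasWeakSecondDeriv u v h) (a : ℝ) :
    v = fun x => v a + ∫ t in a..x, h t :=
  funext fun x => hu.eq_add_integral x a

lemma continuous_deriv (hu : HasWeakSecondDeriv u v h) : Continuous v := by
  rw [hu.deriv_eq_add_integral 0]
  exact continuous_const.add (intervalIntegral.continuous_primitive
    (intervalIntegrable_of_locallyIntegrable hu.locallyIntegrable) 0)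

lemma contDiff (hu : HasWeakSecondDeriv u v h) : ContDiff ℝ 1 u := by
  rw [contDiff_one_iff_deriv, deriv_eq hu.hasDerivAt]
  exact ⟨fun x => (hu.hasDerivAt x).differentiableAt, hu.continuous_deriv⟩

lemma ae_hasDerivAt_deriv (hu : HasWeakSecondDeriv u v h) : ∀ᵐ x, HasDerivAt v (h x) x := by
  filter_upwards [LocallyIntegrable.ae_hasDerivAt_integral hu.locallyIntegrable] with x hx
  rw [hu.deriv_eq_add_integral 0]
  exact (hx 0).const_add (v 0)

lemma absolutelyContinuousOnInterval (hu : HasWeakSecondDeriv u v h) (a b : ℝ) :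
    AbsolutelyContinuousOnInterval u a b :=
  hu.contDiff.contDiffOn.absolutelyContinuousOnInterval

lemma absolutelyContinuousOnInterval_deriv (hu : HasWeakSecondDeriv u v h) (a b : ℝ) :
    AbsolutelyContinuousOnInterval v a b := by
  rw [hu.deriv_eq_add_integral a]
  exact contDiff_const.contDiffOn.absolutelyContinuousOnInterval.fun_add
    ((intervalIntegrable_of_locallyIntegrable hu.locallyIntegrable a b)
      |>.absolutelyContinuousOnInterval_intervalIntegral Set.left_mem_uIcc)

lemma integral_deriv_sq_add_mul (hu : HasWeakSecondDeriv u v h) (a b : ℝ) :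
    ∫ t in a..b, (v t ^ 2 + u t * h t) = u b * v b - u a * v a := by
  rw [← (hu.absolutelyContinuousOnInterval a b).integral_deriv_mul_eq_sub
    (hu.absolutelyContinuousOnInterval_deriv a b)]
  refine intervalIntegral.integral_congr_ae ?_
  filter_upwards [hu.ae_hasDerivAt_deriv] with x hx _
  rw [(hu.hasDerivAt x).deriv, hx.deriv, sq]

lemma absolutelyContinuousOnInterval_energy (hu : HasWeakSecondDeriv u v h) (a b : ℝ) :
    AbsolutelyContinuousOnInterval (fun x => u x ^ 2 + v x ^ 2) a b := by
  have hu' := hu.absolutelyContinuousOnInterval a b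
  have hv' := hu.absolutelyContinuousOnInterval_deriv a b
  simpa only [sq] using (hu'.fun_mul hu').fun_add (hv'.fun_mul hv')

lemma ae_abs_deriv_energy_le {g : ℝ → ℝ} {s : Set ℝ} (hu : HasWeakSecondDeriv u v h)
    (hle : ∀ᵐ x, x ∈ s → |h x| ≤ |g x * u x|) :
    ∀ᵐ x, x ∈ s → |deriv (fun y => u y ^ 2 + v y ^ 2) x| ≤ (1 + |g x|) * (u x ^ 2 + v x ^ 2) := by
  filter_upwards [hle, hu.ae_hasDerivAt_deriv] with x hx hvx hxs
  rw [(((hu.hasDerivAt x).fun_pow 2).fun_add (hvx.fun_pow 2)).deriv]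
  have hamgm : 2 * |u x| * |v x| ≤ u x ^ 2 + v x ^ 2 := by
    simpa only [sq_abs] using two_mul_le_add_sq |u x| |v x|
  calc |(2 : ℕ) * u x ^ (2 - 1) * v x + (2 : ℕ) * v x ^ (2 - 1) * h x|
      = |2 * u x * v x + 2 * v x * h x| := by norm_num
    _ ≤ 2 * |u x| * |v x| + 2 * |v x| * |h x| := by
        simpa only [abs_mul, abs_two] using abs_add_le (2 * u x * v x) (2 * v x * h x)
    _ ≤ 2 * |u x| * |v x| + 2 * |v x| * (|g x| * |u x|) := by
        rw [← abs_mul (g x)]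
        linarith [mul_le_mul_of_nonneg_left (hx hxs) (by positivity : 0 ≤ 2 * |v x|)]
    _ = (1 + |g x|) * (2 * |u x| * |v x|) := by ring
    _ ≤ (1 + |g x|) * (u x ^ 2 + v x ^ 2) := by gcongr

lemma energy_right_le {g : ℝ → ℝ} (hu : HasWeakSecondDeriv u v h) (hab : a ≤ b)
    (hg : IntervalIntegrable g volume a b)
    (hle : ∀ᵐ x, x ∈ Set.Icc a b → |h x| ≤ |g x * u x|) :
    u b ^ 2 + v b ^ 2 ≤ (u a ^ 2 + v a ^ 2) * Real.exp (∫ t in a..b, (1 + |g t|)) :=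
  le_mul_exp_integral_of_deriv_le hab (hu.absolutelyContinuousOnInterval_energy a b)
    (intervalIntegrable_const.add hg.abs) ((hu.ae_abs_deriv_energy_le hle).mono fun _ hx hxab =>
      (abs_le.1 (hx hxab)).2)

lemma energy_left_le {g : ℝ → ℝ} (hu : HasWeakSecondDeriv u v h) (hab : a ≤ b)
    (hg : IntervalIntegrable g volume a b)
    (hle : ∀ᵐ x, x ∈ Set.Icc a b → |h x| ≤ |g x * u x|) :
    u a ^ 2 + v a ^ 2 ≤ (u b ^ 2 + v b ^ 2) * Real.exp (∫ t in a..b, (1 + |g t|)) := by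
  have hgrow := mul_exp_integral_le_of_le_deriv hab (hu.absolutelyContinuousOnInterval_energy a b)
    (k := fun t => -(1 + |g t|)) (intervalIntegrable_const.add hg.abs).neg
    ((hu.ae_abs_deriv_energy_le hle).mono fun x hx hxab => by
      rw [neg_mul]
      exact (abs_le.1 (hx hxab)).1)
  rwa [intervalIntegral.integral_neg, Real.exp_neg, ← div_eq_mul_inv,
    div_le_iff₀ (Real.exp_pos _)] at hgrow

lemma eq_right_of_eq_left {g : ℝ → ℝ} (hu₁ : HasWeakSecondDeriv u₁ v₁ h₁)
    (hu₂ : HasWeakSecondDeriv u₂ v₂ h₂) (hab : a ≤ b) (hg : IntervalIntegrable g volume a b)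
    (hle : ∀ᵐ x, x ∈ Set.Icc a b → |h₁ x - h₂ x| ≤ |g x * (u₁ x - u₂ x)|)
    (hua : u₁ a = u₂ a) (hva : v₁ a = v₂ a) : u₁ b = u₂ b ∧ v₁ b = v₂ b := by
  have hgrow := (hu₁.sub hu₂).energy_right_le hab hg hle
  simp only [Pi.sub_apply, hua, hva, sub_self, ne_eq, OfNat.ofNat_ne_zero, not_false_eq_true,
    zero_pow, add_zero, zero_mul] at hgrow
  have hub : (u₁ b - u₂ b) ^ 2 = 0 := by linarith [sq_nonneg (u₁ b - u₂ b), sq_nonneg (v₁ b - v₂ b)]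
  have hvb : (v₁ b - v₂ b) ^ 2 = 0 := by linarith [sq_nonneg (u₁ b - u₂ b), sq_nonneg (v₁ b - v₂ b)]
  exact ⟨sub_eq_zero.1 (sq_eq_zero_iff.1 hub), sub_eq_zero.1 (sq_eq_zero_iff.1 hvb)⟩

lemma dirichlet_le {f g : ℝ → ℝ} {lam s : ℝ}
    (hu : HasWeakSecondDeriv u v (fun t => (g t + lam * f t) * u t)) (hab : a ≤ b)
    (hg : IntervalIntegrable g volume a b) (hf : IntervalIntegrable f volume a b)
    (hs : ∀ t ∈ Set.Icc a b, u t ^ 2 ≤ s) :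
    (∫ t in a..b, v t ^ 2) + lam * ∫ t in a..b, f t * u t ^ 2 ≤
      (u a ^ 2 + v a ^ 2 + (u b ^ 2 + v b ^ 2)) / 2 + s * ∫ t in a..b, |g t| := by
  have hu2 : ContinuousOn (fun t => u t ^ 2) (Set.uIcc a b) := (hu.continuous.pow 2).continuousOn
  have hfu := hf.mul_continuousOn hu2
  have hgu := hg.mul_continuousOn hu2
  have hv2 : IntervalIntegrable (fun t => v t ^ 2) volume a b :=
    (hu.continuous_deriv.pow 2).intervalIntegrable a b
  have hgreen : (∫ t in a..b, v t ^ 2) + lam * (∫ t in a..b, f t * u t ^ 2) +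
      ∫ t in a..b, g t * u t ^ 2 = u b * v b - u a * v a := by
    rw [← hu.integral_deriv_sq_add_mul a b, ← intervalIntegral.integral_const_mul,
      ← intervalIntegral.integral_add hv2 (hfu.const_mul lam),
      ← intervalIntegral.integral_add (hv2.add (hfu.const_mul lam)) hgu]
    exact intervalIntegral.integral_congr fun t _ => by ring
  have hgs : |∫ t in a..b, g t * u t ^ 2| ≤ s * ∫ t in a..b, |g t| := by
    rw [← intervalIntegral.integral_const_mul, ← Real.norm_eq_abs]
    refine intervalIntegral.norm_integral_le_of_norm_le hab (.of_forall fun t ht => ?_)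
      (hg.abs.const_mul s)
    rw [Real.norm_eq_abs, abs_mul, abs_sq, mul_comm]
    exact mul_le_mul_of_nonneg_right (hs t (Set.Ioc_subset_Icc_self ht)) (abs_nonneg _)
  linarith [(abs_le.1 hgs).1, two_mul_le_add_sq (u b) (v b), two_mul_le_add_sq (u a) (-v a),
    neg_sq (v a)]

/-! ### Solutions that start with a zero -/

section Positivity

variable {q g : ℝ → ℝ} {η : ℝ}

lemma sub_mul_integral_abs_le_deriv (hu : HasWeakSecondDeriv u v (fun t => q t * u t))
    (hg : IntervalIntegrable g volume a b) (hq : ∀ᵐ t, t ∈ Set.Icc a b → -|g t| ≤ q t)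
    (hη : ∀ t ∈ Set.Icc a b, u t ≤ η) {x : ℝ} (hx : x ∈ Set.Icc a b)
    (hnonneg : ∀ t ∈ Set.Icc a x, 0 ≤ u t) : v a - η * ∫ t in a..b, |g t| ≤ v x := by
  have hη_nonneg : 0 ≤ η :=
    (hnonneg a (Set.left_mem_Icc.2 hx.1)).trans (hη a (Set.left_mem_Icc.2 (hx.1.trans hx.2)))
  have hgx : IntervalIntegrable g volume a x :=
    hg.mono_set (Set.uIcc_subset_uIcc_left (Set.Icc_subset_uIcc hx))
  have hlower : ∫ t in a..x, -(η * |g t|) ≤ ∫ t in a..x, q t * u t := by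
    refine intervalIntegral.integral_mono_ae_restrict hx.1 (hgx.abs.const_mul η).neg
      (intervalIntegrable_of_locallyIntegrable hu.locallyIntegrable a x)
      ((ae_restrict_iff' measurableSet_Icc).2 ?_)
    filter_upwards [hq] with t hqt ht
    have htb : t ∈ Set.Icc a b := ⟨ht.1, ht.2.trans hx.2⟩
    calc -(η * |g t|) ≤ -|g t| * u t := by
          linarith [mul_le_mul_of_nonneg_right (hη t htb) (abs_nonneg (g t))]
      _ ≤ q t * u t := mul_le_mul_of_nonneg_right (hqt htb) (hnonneg t ht)
  have hmass : ∫ t in a..x, |g t| ≤ ∫ t in a..b, |g t| :=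
    intervalIntegral.integral_mono_interval le_rfl hx.1 hx.2 (.of_forall fun t => abs_nonneg _)
      hg.abs
  rw [intervalIntegral.integral_neg, intervalIntegral.integral_const_mul] at hlower
  linarith [hu.eq_add_integral x a, mul_le_mul_of_nonneg_left hmass hη_nonneg]

lemma nonneg_of_deriv_pos (hu : HasWeakSecondDeriv u v h) (hua : 0 ≤ u a)
    (hv : ∀ t ∈ Set.Ioo a b, 0 < v t) : ∀ t ∈ Set.Icc a b, 0 ≤ u t := by
  have hmono : MonotoneOn u (Set.Icc a b) := by
    refine monotoneOn_of_deriv_nonneg (convex_Icc a b) hu.continuous.continuousOn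
      (fun t _ => (hu.hasDerivAt t).differentiableAt.differentiableWithinAt) fun t ht => ?_
    rw [(hu.hasDerivAt t).deriv]
    exact (hv t (interior_Icc (a := a) ▸ ht)).le
  exact fun t ht => hua.trans (hmono (Set.left_mem_Icc.2 (ht.1.trans ht.2)) ht ht.1)

lemma deriv_pos_of_mul_integral_abs_lt (hu : HasWeakSecondDeriv u v (fun t => q t * u t))
    (hg : IntervalIntegrable g volume a b) (hq : ∀ᵐ t, t ∈ Set.Icc a b → -|g t| ≤ q t)
    (hη : ∀ t ∈ Set.Icc a b, u t ≤ η) (hua : 0 ≤ u a)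
    (hva : η * ∫ t in a..b, |g t| < v a) : ∀ t ∈ Set.Icc a b, 0 < v t := by
  by_contra! hneg
  have hcompact : IsCompact (Set.Icc a b ∩ {t | v t ≤ 0}) :=
    isCompact_Icc.inter_right (isClosed_le hu.continuous_deriv continuous_const)
  obtain ⟨τ, ⟨hτ, hvτ⟩, hfirst⟩ := hcompact.exists_isLeast hneg
  have hpos : ∀ t ∈ Set.Ioo a τ, 0 < v t := fun t ht => by
    by_contra! hvt
    exact (hfirst ⟨⟨ht.1.le, ht.2.le.trans hτ.2⟩, hvt⟩).not_gt ht.2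
  have hlower := hu.sub_mul_integral_abs_le_deriv hg hq hη hτ (hu.nonneg_of_deriv_pos hua hpos)
  exact (sub_pos.2 hva).not_ge (hlower.trans hvτ)

lemma sub_mul_deriv_left_le (hu : HasWeakSecondDeriv u v (fun t => q t * u t)) (hab : a ≤ b)
    (hg : IntervalIntegrable g volume a b) (hq : ∀ᵐ t, t ∈ Set.Icc a b → -|g t| ≤ q t)
    (hη : ∀ t ∈ Set.Icc a b, u t ≤ η) (hua : 0 ≤ u a) :
    (b - a) * (v a - η * ∫ t in a..b, |g t|) ≤ η := by
  have ha := Set.left_mem_Icc.2 hab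
  have hb := Set.right_mem_Icc.2 hab
  rcases le_or_gt (v a) (η * ∫ t in a..b, |g t|) with hva | hva
  · exact (mul_nonpos_of_nonneg_of_nonpos (sub_nonneg.2 hab) (sub_nonpos.2 hva)).trans
      (hua.trans (hη a ha))
  have hpos := hu.deriv_pos_of_mul_integral_abs_lt hg hq hη hua hva
  have hnonneg := hu.nonneg_of_deriv_pos hua fun t ht => hpos t (Set.Ioo_subset_Icc_self ht)
  have hgrow : (v a - η * ∫ t in a..b, |g t|) * (b - a) ≤ u b - u a := by
    refine (convex_Icc a b).mul_sub_le_image_sub_of_le_deriv hu.continuous.continuousOn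
      (fun t _ => (hu.hasDerivAt t).differentiableAt.differentiableWithinAt)
      (fun t ht => ?_) a ha b hb hab
    rw [(hu.hasDerivAt t).deriv]
    have htab := interior_subset ht
    exact hu.sub_mul_integral_abs_le_deriv hg hq hη htab fun s hs =>
      hnonneg s ⟨hs.1, hs.2.trans htab.2⟩
  linarith [hη b hb]

lemma sub_mul_abs_deriv_left_le (hu : HasWeakSecondDeriv u v (fun t => q t * u t)) (hab : a ≤ b)
    (hg : IntervalIntegrable g volume a b) (hq : ∀ᵐ t, t ∈ Set.Icc a b → -|g t| ≤ q t)
    (hη : ∀ t ∈ Set.Icc a b, |u t| ≤ η) (hua : u a = 0) :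
    (b - a) * (|v a| - η * ∫ t in a..b, |g t|) ≤ η := by
  rcases abs_cases (v a) with ⟨hva, -⟩ | ⟨hva, -⟩ <;> rw [hva]
  · exact hu.sub_mul_deriv_left_le hab hg hq (fun t ht => (le_abs_self _).trans (hη t ht)) hua.ge
  · have hneg : HasWeakSecondDeriv (-u) (-v) (fun t => q t * (-u) t) := by
      convert hu.neg using 1
      exact funext fun t => by simp only [Pi.neg_apply, mul_neg]
    exact hneg.sub_mul_deriv_left_le hab hg hq (fun t ht => (neg_le_abs _).trans (hη t ht))
      (by simp [hua])

end Positivity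

/-! ### Large coupling -/

lemma eventually_abs_le {f g : ℝ → ℝ} {a b η M : ℝ} (hg : LocallyIntegrable g)
    (hf : LocallyIntegrable f) (hf_pos : ∀ᵐ t, t ∈ Set.Icc a b → 0 < f t) (hab : a < b)
    (hη : 0 < η) :
    ∀ᶠ lam : ℝ in atTop, ∀ u v : ℝ → ℝ,
      HasWeakSecondDeriv u v (fun t => (g t + lam * f t) * u t) →
      u a ^ 2 + v a ^ 2 ≤ M → u b ^ 2 + v b ^ 2 ≤ M → ∀ x ∈ Set.Icc a b, |u x| ≤ η := by
  set G := ∫ t in a..b, |g t|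
  have hG : 0 ≤ G := intervalIntegral.integral_nonneg hab.le fun t _ => abs_nonneg _
  obtain ⟨ε₁, hε₁, hε₁G⟩ := exists_pos_mul_lt (one_half_pos (α := ℝ)) G
  obtain ⟨ε₂, hε₂, hε₂M⟩ := exists_pos_mul_lt (pow_pos hη 2) (2 * M)
  have hε : 0 < min ε₁ ε₂ := lt_min hε₁ hε₂
  filter_upwards [eventually_sq_le_mul_dirichlet hf hf_pos hab hε] with lam hlam u v hu hMa hMb x hx
  set ε := min ε₁ ε₂
  set D := (∫ t in a..b, v t ^ 2) + lam * ∫ t in a..b, f t * u t ^ 2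
  have hsup : ∀ t ∈ Set.Icc a b, u t ^ 2 ≤ ε * D := hlam u v hu.hasDerivAt hu.continuous_deriv
  have hD : 0 ≤ D := nonneg_of_mul_nonneg_right ((sq_nonneg _).trans (hsup x hx)) hε
  have hDM : D ≤ 2 * M := by
    have hgreen : D ≤ M + ε * D * G := by
      linarith [hu.dirichlet_le hab.le (intervalIntegrable_of_locallyIntegrable hg a b)
        (intervalIntegrable_of_locallyIntegrable hf a b) hsup]
    have hεG : G * ε ≤ 1 / 2 := (mul_le_mul_of_nonneg_left (min_le_left _ _) hG).trans hε₁G.le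
    linarith [mul_le_mul_of_nonneg_right hεG hD]
  refine abs_le_of_sq_le_sq ?_ hη.le
  calc u x ^ 2 ≤ ε * D := hsup x hx
    _ ≤ ε₂ * (2 * M) := mul_le_mul (min_le_right _ _) hDM hD hε₂.le
    _ ≤ η ^ 2 := by linarith

lemma eventually_lt_energy {f g : ℝ → ℝ} {a b α γ : ℝ} (hg : LocallyIntegrable g)
    (hf : LocallyIntegrable f) (hf_pos : ∀ᵐ t, t ∈ Set.Icc a b → 0 < f t) (hab : a < b)
    (hαγ : 0 < α ^ 2 + γ ^ 2) (M : ℝ) :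
    ∀ᶠ lam : ℝ in atTop, ∀ u v : ℝ → ℝ,
      HasWeakSecondDeriv u v (fun t => (g t + lam * f t) * u t) → u a = α → v a = γ →
      M < u b ^ 2 + v b ^ 2 := by
  set B := max (α ^ 2 + γ ^ 2) M
  rcases ne_or_eq α 0 with hα | rfl
  · filter_upwards [eventually_abs_le (M := B) hg hf hf_pos hab (half_pos (abs_pos.2 hα))]
      with lam hsmall u v hu rfl rfl
    by_contra! hM
    have hua := hsmall u v hu (le_max_left _ _) (hM.trans (le_max_right _ _)) a
      (Set.left_mem_Icc.2 hab.le)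
    exact hua.not_gt (half_lt_self (abs_pos.2 hα))
  · have hγ : 0 < (b - a) * |γ| := by
      refine mul_pos (sub_pos.2 hab) (abs_pos.2 ?_)
      rintro rfl
      simp at hαγ
    obtain ⟨η, hη, hη_lt⟩ := exists_pos_mul_lt hγ (1 + (b - a) * ∫ t in a..b, |g t|)
    filter_upwards [eventually_abs_le (M := B) hg hf hf_pos hab hη, eventually_ge_atTop 0]
      with lam hsmall hlam u v hu hua rfl
    by_contra! hM
    have hu_le := hsmall u v hu (by rw [hua]; exact le_max_left _ _) (hM.trans (le_max_right _ _))
    have hq : ∀ᵐ t, t ∈ Set.Icc a b → -|g t| ≤ g t + lam * f t := by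
      filter_upwards [hf_pos] with t hft ht
      exact (neg_abs_le _).trans (le_add_of_nonneg_right (mul_nonneg hlam (hft ht).le))
    have hslope := hu.sub_mul_abs_deriv_left_le hab.le
      (intervalIntegrable_of_locallyIntegrable hg a b) hq hu_le hua
    linarith

end HasWeakSecondDeriv

theorem prufer_amplitude_large_coupling_general {g f : ℝ → ℝ} (hg : LocallyIntegrable g)
    (hf : LocallyIntegrable f) {a b c d : ℝ} (hca : c ≤ a) (hab : a < b) (hbd : b ≤ d)
    (hf_pos : ∀ᵐ x, x ∈ Set.Icc a b → 0 < f x) (hf_zero : ∀ᵐ x, x ∉ Set.Icc a b → f x = 0)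
    {α γ : ℝ} (hαγ : 0 < α ^ 2 + γ ^ 2) {u v : ℝ → ℝ → ℝ}
    (hu : ∀ lam x : ℝ, HasDerivAt (fun s => u s lam) (v x lam) x)
    (hv : ∀ lam x y : ℝ, v x lam = v y lam + ∫ t in y..x, (g t + lam * f t) * u t lam)
    (hu0 : ∀ lam : ℝ, u c lam = α) (hv0 : ∀ lam : ℝ, v c lam = γ) :
    Tendsto (fun lam : ℝ => u d lam ^ 2 + v d lam ^ 2) atTop atTop := by
  have hg_int := intervalIntegrable_of_locallyIntegrable hg
  have hsol (lam : ℝ) : HasWeakSecondDeriv (fun x => u x lam) (fun x => v x lam)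
      (fun x => (g x + lam * f x) * u x lam) :=
    .of_locallyIntegrable (hg.add (hf.smul lam)) (hu lam) (hv lam)
  have hleft : ∀ᵐ x, x ∈ Set.Icc c a → f x = 0 := by
    filter_upwards [hf_zero, Measure.ae_ne volume a] with x hx hxa hxca
    exact hx fun hxab => hxa (le_antisymm hxca.2 hxab.1)
  have hright : ∀ᵐ x, x ∈ Set.Icc b d → f x = 0 := by
    filter_upwards [hf_zero, Measure.ae_ne volume b] with x hx hxb hxbd
    exact hx fun hxab => hxb (le_antisymm hxab.2 hxbd.1)
  have hdata (lam : ℝ) : u a lam = u a 0 ∧ v a lam = v a 0 := by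
    refine (hsol lam).eq_right_of_eq_left (hsol 0) hca (hg_int c a) ?_
      ((hu0 lam).trans (hu0 0).symm) ((hv0 lam).trans (hv0 0).symm)
    filter_upwards [hleft] with x hx hxca
    rw [hx hxca, mul_zero, mul_zero, mul_sub, add_zero]
  have hdata_pos : 0 < u a 0 ^ 2 + v a 0 ^ 2 := by
    have hback := (hsol 0).energy_left_le hca (hg_int c a) (.of_forall fun x _ => by simp)
    rw [hu0, hv0] at hback
    exact pos_of_mul_pos_left (hαγ.trans_le hback) (Real.exp_pos _).le
  set K := Real.exp (∫ t in b..d, (1 + |g t|))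
  refine tendsto_atTop.2 fun M => ?_
  filter_upwards [HasWeakSecondDeriv.eventually_lt_energy hg hf hf_pos hab hdata_pos (M * K)]
    with lam hlam
  have hamplitude := hlam _ _ (hsol lam) (hdata lam).1 (hdata lam).2
  have htransfer := (hsol lam).energy_left_le hbd (hg_int b d) (by
    filter_upwards [hright] with x hx hxbd
    rw [hx hxbd, mul_zero, add_zero])
  exact le_of_mul_le_mul_right (hamplitude.le.trans htransfer) (Real.exp_pos _)

/-- Large coupling limit of the Prüfer amplitude: `R(0,λ)² = u_λ(0)² + v_λ(0)² → ∞`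
as `λ → ∞`. -/
theorem prufer_amplitude_large_coupling (g f : ℝ → ℝ)
    (hgm : Measurable g) (hgb : ∃ Cg : ℝ, ∀ x : ℝ, |g x| ≤ Cg)
    (a b : ℝ) (ha : -1 ≤ a) (hab : a < b) (hb : b ≤ 0)
    (hfm : Measurable f) (C : ℝ)
    (hf : ∀ x : ℝ, 0 ≤ f x ∧ f x ≤ C)
    (hfpos : ∀ᵐ x ∂volume, x ∈ Set.Icc a b → 0 < f x)
    (hfzero : ∀ x : ℝ, x ∉ Set.Icc a b → f x = 0)
    (β : ℝ) (u v : ℝ → ℝ → ℝ)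
    (hu : ∀ (lam : ℝ) (x : ℝ), HasDerivAt (fun s => u s lam) (v x lam) x)
    (hv : ∀ (lam : ℝ) (x y : ℝ),
      v x lam = v y lam + ∫ t in y..x, (g t + lam * f t) * u t lam)
    (hu0 : ∀ lam : ℝ, u (-1) lam = Real.sin β)
    (hv0 : ∀ lam : ℝ, v (-1) lam = Real.cos β) :
    Tendsto (fun lam : ℝ => u 0 lam ^ 2 + v 0 lam ^ 2) atTop atTop := by
  obtain ⟨Cg, hCg⟩ := hgb
  exact prufer_amplitude_large_coupling_general (locallyIntegrable_of_abs_le hgm hCg)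
    (locallyIntegrable_of_abs_le hfm fun x => (abs_of_nonneg (hf x).1).trans_le (hf x).2) ha hab hb
    hfpos (.of_forall hfzero) (by simp) hu hv hu0 hv0
end

section
/- Let g : ℝ → ℝ be bounded and measurable, let [a, b] ⊆ [−1, 0] with a < b, and let f : ℝ → ℝ be measurable with 0 ≤ f(x) ≤ C for all x and some constant C < ∞, f(x) > 0 for almost every x ∈ [a, b], and f(x) = 0 for all x ∉ [a, b]. Let θ ∈ [0, π), and for each λ ∈ ℝ let (u(·,λ), v(·,λ)) be the solution of −u″ + (g + λ·f)·u = 0 with u(a,λ) = sin θ and v(a,λ) = cos θ, and let (R(·,λ), φ(·,λ)) be Prüfer variables for it with φ(a,λ) = θ. Then there exist λ₀ ∈ ℝ and η ∈ (0, π) such that φ(x,λ) < η for all λ ≥ λ₀ and all x ∈ [a, b]. -/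
open MeasureTheory

/-! Along a solution of `-u'' + q u = 0` with `v = u'`, the function `cot φ = v / u` satisfies the
Riccati equation `(cot φ)' = q - cot² φ`. If `φ` climbs from `α` to `η`, with `0 < α < η < π`, it
does so within the strip `[α, η]`, where `cot² φ` is at most some constant `M`. During the climb
`cot φ` drops by `cot α - cot η > 0`, and by the Riccati equation this is at most the integral of
`(M - q)⁺`. For `q = g + λ f` that integral tends to `0` as `λ → ∞`, by dominated convergence, so
no climb is possible for large `λ`. -/

open Set Filter Topology

section Crossing

variable {X Y : Type*} [ConditionallyCompleteLinearOrder X] [TopologicalSpace X] [OrderTopology X]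
  [DenselyOrdered X] [LinearOrder Y] [TopologicalSpace Y] [OrderClosedTopology Y]
  {f : X → Y} {a b : X} {c d : Y}

theorem exists_eq_forall_ge_on_right (hab : a ≤ b) (hf : ContinuousOn f (Icc a b))
    (ha : f a ≤ c) (hb : c ≤ f b) :
    ∃ x ∈ Icc a b, f x = c ∧ ∀ y ∈ Icc x b, c ≤ f y := by
  have hcompact : IsCompact (Icc a b ∩ f ⁻¹' {c}) :=
    isCompact_Icc.of_isClosed_subset (hf.preimage_isClosed_of_isClosed isClosed_Icc
      isClosed_singleton) inter_subset_left
  obtain ⟨x, ⟨hx, hfx⟩, hmax⟩ :=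
    hcompact.exists_isGreatest (intermediate_value_Icc hab hf ⟨ha, hb⟩)
  refine ⟨x, hx, hfx, fun y hy ↦ le_of_not_gt fun hyc ↦ ?_⟩
  have hay : a ≤ y := hx.1.trans hy.1
  obtain ⟨z, hz, hfz⟩ :=
    intermediate_value_Icc hy.2 (hf.mono (Icc_subset_Icc_left hay)) ⟨hyc.le, hb⟩
  have hzx : z ≤ x := hmax ⟨⟨hay.trans hz.1, hz.2⟩, hfz⟩
  have hyx : y = x := (hz.1.trans hzx).antisymm hy.1
  exact hyc.ne (hyx ▸ hfx)

theorem exists_eq_forall_le_on_left (hab : a ≤ b) (hf : ContinuousOn f (Icc a b))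
    (ha : f a ≤ c) (hb : c ≤ f b) :
    ∃ x ∈ Icc a b, f x = c ∧ ∀ y ∈ Icc a x, f y ≤ c := by
  obtain ⟨x, hx, hfx, hle⟩ := exists_eq_forall_ge_on_right (X := Xᵒᵈ) (Y := Yᵒᵈ)
    (f := OrderDual.toDual ∘ f ∘ OrderDual.ofDual) (a := OrderDual.toDual b)
    (b := OrderDual.toDual a) (c := OrderDual.toDual c) hab
    (by rw [Icc_toDual]; exact hf) hb ha
  exact ⟨x, hx.symm, hfx, fun y hy ↦ hle y hy.symm⟩

theorem exists_mapsTo_Icc_Icc (hab : a ≤ b) (hf : ContinuousOn f (Icc a b)) (hcd : c ≤ d)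
    (ha : f a ≤ c) (hb : d ≤ f b) :
    ∃ x y, a ≤ x ∧ x ≤ y ∧ y ≤ b ∧ f x = c ∧ f y = d ∧ MapsTo f (Icc x y) (Icc c d) := by
  obtain ⟨x, hx, hfx, hle⟩ := exists_eq_forall_ge_on_right hab hf ha (hcd.trans hb)
  obtain ⟨y, hy, hfy, hge⟩ := exists_eq_forall_le_on_left hx.2
    (hf.mono (Icc_subset_Icc_left hx.1)) (hfx.trans_le hcd) hb
  exact ⟨x, y, hx.1, hy.1, hy.2, hfx, hfy, fun z hz ↦ ⟨hle z ⟨hz.1, hz.2.trans hy.2⟩, hge z hz⟩⟩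

end Crossing

theorem strictAntiOn_cot_Ioo : StrictAntiOn Real.cot (Ioo 0 Real.pi) := by
  intro x hx y hy hxy
  have hsin : 0 < Real.sin (y - x) :=
    Real.sin_pos_of_pos_of_lt_pi (sub_pos.2 hxy) (by linarith [hx.1, hy.2])
  rw [Real.sin_sub] at hsin
  rw [Real.cot_eq_cos_div_sin, Real.cot_eq_cos_div_sin,
    div_lt_div_iff₀ (Real.sin_pos_of_mem_Ioo hy) (Real.sin_pos_of_mem_Ioo hx)]
  linarith

theorem exists_forall_cot_sq_le {α η : ℝ} (hα : 0 < α) (hη : η < Real.pi) :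
    ∃ M, ∀ y ∈ Icc α η, Real.cot y ^ 2 ≤ M := by
  have hsub : Icc α η ⊆ Ioo 0 Real.pi := fun y hy ↦ ⟨hα.trans_le hy.1, hy.2.trans_lt hη⟩
  have hcont : ContinuousOn (fun y ↦ (Real.cos y / Real.sin y) ^ 2) (Icc α η) :=
    (Real.continuousOn_cos.div Real.continuousOn_sin fun y hy ↦
      (Real.sin_pos_of_mem_Ioo (hsub hy)).ne').pow 2
  obtain ⟨M, hM⟩ := isCompact_Icc.bddAbove_image hcont
  refine ⟨M, fun y hy ↦ ?_⟩
  rw [Real.cot_eq_cos_div_sin]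
  exact hM (mem_image_of_mem _ hy)

section LocallyIntegrable

variable {X : Type*} [TopologicalSpace X] [MeasurableSpace X] {μ : Measure X}

theorem locallyIntegrable_of_norm_le {E : Type*} [NormedAddCommGroup E] [IsLocallyFiniteMeasure μ]
    {h : X → E} {K : ℝ} (hm : AEStronglyMeasurable h μ) (hK : ∀ᵐ x ∂μ, ‖h x‖ ≤ K) :
    LocallyIntegrable h μ :=
  (memLp_top_of_bound hm K hK).locallyIntegrable le_top

theorem locallyIntegrable_max_zero {h : X → ℝ} (hh : LocallyIntegrable h μ) :
    LocallyIntegrable (fun x ↦ max (h x) 0) μ := fun x ↦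
  let ⟨s, hs, hint⟩ := hh x
  ⟨s, hs, hint.pos_part⟩

theorem intervalIntegrable_of_locallyIntegrable_s11 {E : Type*} [NormedAddCommGroup E]
    {μ : Measure ℝ} {h : ℝ → E} (hh : LocallyIntegrable h μ) (x y : ℝ) :
    IntervalIntegrable h μ x y :=
  (hh.integrableOn_isCompact isCompact_uIcc).intervalIntegrable

end LocallyIntegrable

theorem tendsto_integral_max_sub_mul_atTop_zero {Ω : Type*} [MeasurableSpace Ω] {μ : Measure Ω}
    {h f : Ω → ℝ} (hh : Integrable h μ) (hf : AEStronglyMeasurable f μ)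
    (hpos : ∀ᵐ x ∂μ, 0 < f x) :
    Tendsto (fun t : ℝ ↦ ∫ x, max (h x - t * f x) 0 ∂μ) atTop (𝓝 0) := by
  suffices Tendsto (fun t : ℝ ↦ ∫ x, max (h x - t * f x) 0 ∂μ) atTop (𝓝 (∫ _, 0 ∂μ)) by
    rwa [integral_zero] at this
  refine tendsto_integral_filter_of_dominated_convergence (fun x ↦ |h x|)
    (Eventually.of_forall fun t ↦
      (hh.aestronglyMeasurable.sub (hf.const_mul t)).sup aestronglyMeasurable_const)
    ?_ hh.abs ?_
  · filter_upwards [eventually_ge_atTop 0] with t ht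
    filter_upwards [hpos] with x hx
    rw [Real.norm_of_nonneg (le_max_right _ _)]
    exact max_le (by linarith [le_abs_self (h x), mul_nonneg ht hx.le]) (abs_nonneg _)
  · filter_upwards [hpos] with x hx
    refine tendsto_const_nhds.congr' ?_
    filter_upwards [eventually_ge_atTop (h x / f x)] with t ht
    rw [div_le_iff₀ hx] at ht
    exact (max_eq_right (sub_nonpos.2 ht)).symm

/-- The pair `(u, v)` solves `-u'' + q u = 0` on the whole line, with `v` standing for `u'`. As
`q` need not be continuous, the equation is imposed in integrated form. -/
structure IsSchrodingerSolution (q u v : ℝ → ℝ) : Prop where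
  hasDerivAt : ∀ x, HasDerivAt u (v x) x
  eq_add_integral : ∀ x y, v x = v y + ∫ t in y..x, q t * u t

namespace IsSchrodingerSolution

variable {q u v : ℝ → ℝ} (hs : IsSchrodingerSolution q u v) (hq : LocallyIntegrable q)
include hs

theorem continuous : Continuous u :=
  continuous_iff_continuousAt.2 fun x ↦ (hs.hasDerivAt x).continuousAt

theorem eq_primitive (x₀ : ℝ) : v = fun x ↦ v x₀ + ∫ t in x₀..x, q t * u t :=
  funext fun x ↦ hs.eq_add_integral x x₀

include hq

theorem locallyIntegrable_mul : LocallyIntegrable fun x ↦ q x * u x :=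
  hq.mul_continuous hs.continuous

theorem intervalIntegrable_mul (x y : ℝ) : IntervalIntegrable (fun t ↦ q t * u t) volume x y :=
  intervalIntegrable_of_locallyIntegrable_s11 (hs.locallyIntegrable_mul hq) x y

theorem absolutelyContinuousOnInterval_deriv (x y : ℝ) : AbsolutelyContinuousOnInterval v x y := by
  rw [hs.eq_primitive x]
  exact contDiffOn_const.absolutelyContinuousOnInterval.add
    ((hs.intervalIntegrable_mul hq x y).absolutelyContinuousOnInterval_intervalIntegral
      left_mem_uIcc)

theorem ae_hasDerivAt_deriv : ∀ᵐ x, HasDerivAt v (q x * u x) x := by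
  filter_upwards [LocallyIntegrable.ae_hasDerivAt_integral (hs.locallyIntegrable_mul hq)] with x hx
  rw [hs.eq_primitive 0]
  exact (hx 0).const_add (v 0)

theorem continuous_deriv : Continuous v := by
  rw [hs.eq_primitive 0]
  exact continuous_const.add
    (intervalIntegral.continuous_primitive (hs.intervalIntegrable_mul hq) 0)

theorem contDiff_one : ContDiff ℝ 1 u := by
  refine contDiff_one_iff_deriv.2 ⟨fun x ↦ (hs.hasDerivAt x).differentiableAt, ?_⟩
  rw [funext fun x ↦ (hs.hasDerivAt x).deriv]
  exact hs.continuous_deriv hq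

theorem intervalIntegrable_riccati {x y : ℝ} (hu : ∀ z ∈ uIcc x y, u z ≠ 0) :
    IntervalIntegrable (fun t ↦ q t - (v t / u t) ^ 2) volume x y :=
  (intervalIntegrable_of_locallyIntegrable_s11 hq x y).sub (ContinuousOn.intervalIntegrable
    (((hs.continuous_deriv hq).continuousOn.div hs.continuous.continuousOn hu).pow 2))

theorem integral_riccati {x y : ℝ} (hu : ∀ z ∈ uIcc x y, u z ≠ 0) :
    ∫ t in x..y, (q t - (v t / u t) ^ 2) = v y / u y - v x / u x := by
  have hac : AbsolutelyContinuousOnInterval (fun t ↦ v t / u t) x y := by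
    simp only [div_eq_mul_inv]
    exact (hs.absolutelyContinuousOnInterval_deriv hq x y).mul
      ((hs.contDiff_one hq).contDiffOn.inv hu).absolutelyContinuousOnInterval
  rw [← hac.integral_deriv_eq_sub]
  refine intervalIntegral.integral_congr_ae ?_
  filter_upwards [hs.ae_hasDerivAt_deriv hq] with t hv ht
  have hut : u t ≠ 0 := hu t (uIoc_subset_uIcc ht)
  rw [(hv.fun_div (hs.hasDerivAt t) hut).deriv]
  field_simp

end IsSchrodingerSolution

/-- `(R, φ)` are Prüfer variables (polar coordinates with a continuous angle) for `(u, v)`. The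
angle is measured from the `v`-axis, so that zeros of `u` are the points with `φ ∈ π ℤ`. -/
structure IsPruferPair (u v R φ : ℝ → ℝ) : Prop where
  radius_pos : ∀ x, 0 < R x
  continuous_phase : Continuous φ
  eq_sin : ∀ x, u x = R x * Real.sin (φ x)
  eq_cos : ∀ x, v x = R x * Real.cos (φ x)

namespace IsPruferPair

variable {q u v R φ : ℝ → ℝ} (hp : IsPruferPair u v R φ)
include hp

theorem pos_of_phase_mem_Ioo {x : ℝ} (hx : φ x ∈ Ioo 0 Real.pi) : 0 < u x := by
  rw [hp.eq_sin]
  exact mul_pos (hp.radius_pos x) (Real.sin_pos_of_mem_Ioo hx)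

theorem div_eq_cot (x : ℝ) : v x / u x = Real.cot (φ x) := by
  rw [hp.eq_sin, hp.eq_cos, mul_div_mul_left _ _ (hp.radius_pos x).ne', Real.cot_eq_cos_div_sin]

variable (hs : IsSchrodingerSolution q u v) (hq : LocallyIntegrable q)
include hs hq

theorem cot_sub_cot_le_integral {α η M x y : ℝ} (hα : 0 < α) (hη : η < Real.pi)
    (hM : ∀ z ∈ Icc α η, Real.cot z ^ 2 ≤ M) (hxy : x ≤ y) (hφ : MapsTo φ (Icc x y) (Icc α η)) :
    Real.cot (φ x) - Real.cot (φ y) ≤ ∫ t in x..y, max (M - q t) 0 := by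
  have hu : ∀ z ∈ uIcc x y, u z ≠ 0 := fun z hz ↦ by
    rw [uIcc_of_le hxy] at hz
    exact (hp.pos_of_phase_mem_Ioo ⟨hα.trans_le (hφ hz).1, (hφ hz).2.trans_lt hη⟩).ne'
  calc Real.cot (φ x) - Real.cot (φ y)
      = ∫ t in x..y, -(q t - (v t / u t) ^ 2) := by
        rw [intervalIntegral.integral_neg, hs.integral_riccati hq hu, hp.div_eq_cot, hp.div_eq_cot,
          neg_sub]
    _ ≤ ∫ t in x..y, max (M - q t) 0 := by
        refine intervalIntegral.integral_mono_on hxy (hs.intervalIntegrable_riccati hq hu).neg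
          (intervalIntegrable_of_locallyIntegrable_s11
            (locallyIntegrable_max_zero ((locallyIntegrable_const M).sub hq)) x y)
          fun t ht ↦ le_max_of_le_left ?_
        rw [hp.div_eq_cot, neg_sub]
        exact sub_le_sub_right (hM _ (hφ ht)) _

theorem phase_lt_of_integral_lt {a b α η M : ℝ} (hα : 0 < α) (hαη : α ≤ η) (hη : η < Real.pi)
    (hM : ∀ z ∈ Icc α η, Real.cot z ^ 2 ≤ M) (ha : φ a ≤ α)
    (hint : ∫ t in Icc a b, max (M - q t) 0 < Real.cot α - Real.cot η) :
    ∀ x ∈ Icc a b, φ x < η := by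
  intro x hx
  by_contra! hηx
  obtain ⟨x₀, x₁, hax₀, hx₀₁, hx₁x, hφ₀, hφ₁, hφ⟩ :=
    exists_mapsTo_Icc_Icc hx.1 hp.continuous_phase.continuousOn hαη ha hηx
  refine hint.not_ge ?_
  calc Real.cot α - Real.cot η
      ≤ ∫ t in x₀..x₁, max (M - q t) 0 := by
        rw [← hφ₀, ← hφ₁]
        exact hp.cot_sub_cot_le_integral hs hq hα hη hM hx₀₁ hφ
    _ = ∫ t in Ioc x₀ x₁, max (M - q t) 0 := intervalIntegral.integral_of_le hx₀₁
    _ ≤ ∫ t in Icc a b, max (M - q t) 0 :=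
        setIntegral_mono_set
          ((locallyIntegrable_max_zero
            ((locallyIntegrable_const M).sub hq)).integrableOn_isCompact isCompact_Icc)
          (ae_of_all _ fun t ↦ le_max_right _ _)
          (Ioc_subset_Icc_self.trans (Icc_subset_Icc hax₀ (hx₁x.trans hx.2))).eventuallyLE

end IsPruferPair

theorem prufer_phase_uniform_bound_general {g f : ℝ → ℝ} (hg : LocallyIntegrable g)
    (hf : LocallyIntegrable f) {a b : ℝ} (hfpos : ∀ᵐ x, x ∈ Icc a b → 0 < f x)
    {u v R φ : ℝ → ℝ → ℝ}
    (hs : ∀ lam, IsSchrodingerSolution (fun x ↦ g x + lam * f x) (u lam) (v lam))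
    (hp : ∀ lam, IsPruferPair (u lam) (v lam) (R lam) (φ lam))
    {θ η : ℝ} (hφ : ∀ lam, φ lam a ≤ θ) (hθη : θ < η) (hη : η ∈ Ioo 0 Real.pi) :
    ∀ᶠ lam in atTop, ∀ x ∈ Icc a b, φ lam x < η := by
  obtain ⟨α, hα, hαη⟩ := exists_between (max_lt hθη hη.1)
  obtain ⟨hθα, hα0⟩ := max_lt_iff.1 hα
  obtain ⟨M, hM⟩ := exists_forall_cot_sq_le hα0 hη.2
  have hcot : 0 < Real.cot α - Real.cot η :=
    sub_pos.2 (strictAntiOn_cot_Ioo ⟨hα0, hαη.trans hη.2⟩ hη hαη)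
  have hlim : Tendsto (fun lam : ℝ ↦ ∫ x in Icc a b, max (M - g x - lam * f x) 0) atTop (𝓝 0) :=
    tendsto_integral_max_sub_mul_atTop_zero
      (((locallyIntegrable_const M).sub hg).integrableOn_isCompact isCompact_Icc)
      hf.aestronglyMeasurable.restrict ((ae_restrict_iff' measurableSet_Icc).2 hfpos)
  filter_upwards [hlim.eventually_lt_const hcot] with lam hlam
  simp only [sub_sub] at hlam
  exact (hp lam).phase_lt_of_integral_lt (hs lam) (hg.add (hf.smul lam)) hα0 hαη.le hη.2 hM
    ((hφ lam).trans hθα.le) hlam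

/-- Uniform upper bound on the Prüfer phase on `[a,b]` for large coupling:
there are `λ₀` and `η ∈ (0,π)` with `φ(x,λ) < η` for all `λ ≥ λ₀` and `x ∈ [a,b]`. -/
theorem prufer_phase_uniform_bound (g f : ℝ → ℝ)
    (hgm : Measurable g) (hgb : ∃ Cg : ℝ, ∀ x : ℝ, |g x| ≤ Cg)
    (a b : ℝ) (ha : -1 ≤ a) (hab : a < b) (hb : b ≤ 0)
    (hfm : Measurable f) (C : ℝ)
    (hf : ∀ x : ℝ, 0 ≤ f x ∧ f x ≤ C)
    (hfpos : ∀ᵐ x ∂volume, x ∈ Set.Icc a b → 0 < f x)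
    (hfzero : ∀ x : ℝ, x ∉ Set.Icc a b → f x = 0)
    (θ : ℝ) (hθ0 : 0 ≤ θ) (hθπ : θ < Real.pi)
    (u v R φ : ℝ → ℝ → ℝ)
    (hu : ∀ (lam : ℝ) (x : ℝ), HasDerivAt (fun s => u s lam) (v x lam) x)
    (hv : ∀ (lam : ℝ) (x y : ℝ),
      v x lam = v y lam + ∫ t in y..x, (g t + lam * f t) * u t lam)
    (hu0 : ∀ lam : ℝ, u a lam = Real.sin θ)
    (hv0 : ∀ lam : ℝ, v a lam = Real.cos θ)
    (hR : ∀ x lam : ℝ, 0 < R x lam)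
    (hφc : ∀ lam : ℝ, Continuous fun x => φ x lam)
    (huR : ∀ x lam : ℝ, u x lam = R x lam * Real.sin (φ x lam))
    (hvR : ∀ x lam : ℝ, v x lam = R x lam * Real.cos (φ x lam))
    (hφ0 : ∀ lam : ℝ, φ a lam = θ) :
    ∃ lam₀ : ℝ, ∃ η ∈ Set.Ioo 0 Real.pi,
      ∀ lam ≥ lam₀, ∀ x ∈ Set.Icc a b, φ x lam < η := by
  obtain ⟨G, hG⟩ := hgb
  have hg : LocallyIntegrable g :=
    locallyIntegrable_of_norm_le hgm.aestronglyMeasurable (ae_of_all _ hG)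
  have hf' : LocallyIntegrable f :=
    locallyIntegrable_of_norm_le hfm.aestronglyMeasurable
      (ae_of_all _ fun x ↦ (Real.norm_of_nonneg (hf x).1).trans_le (hf x).2)
  have hη : (θ + Real.pi) / 2 ∈ Ioo 0 Real.pi := ⟨by linarith [Real.pi_pos], by linarith⟩
  obtain ⟨lam₀, hlam₀⟩ := eventually_atTop.1 <| prufer_phase_uniform_bound_general hg hf' hfpos
    (fun lam ↦ ⟨hu lam, hv lam⟩)
    (fun lam ↦ ⟨fun x ↦ hR x lam, hφc lam, fun x ↦ huR x lam, fun x ↦ hvR x lam⟩)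
    (fun lam ↦ (hφ0 lam).le) (by linarith) hη
  exact ⟨lam₀, _, hη, hlam₀⟩
end

section
/- Let g : ℝ → ℝ be bounded and measurable and let f : ℝ → ℝ be measurable with c·χ_I(x) ≤ f(x) ≤ C·χ_{[−1,0]}(x) for all x, for some constants 0 < c ≤ C < ∞ and some nontrivial subinterval I of [−1, 0]. Fix α ∈ ℝ, and for each λ ∈ ℝ let (u(·,λ), v(·,λ)) be the solution of −u″ + (g + λ·f)·u = 0 with u(0,λ) = sin α and v(0,λ) = cos α; let R : ℝ×ℝ → (0,∞) and φ : ℝ×ℝ → ℝ satisfy u(x,λ) = R(x,λ)·sin(φ(x,λ)), v(x,λ) = R(x,λ)·cos(φ(x,λ)) and φ(0,λ) = α for all x, λ, with φ jointly continuous. Then λ ↦ φ(−1,λ) is differentiable on ℝ with derivative R(−1,λ)^{−2}·∫_{−1}^0 f(t)·u(t,λ)² dt, which is strictly positive; in particular λ ↦ φ(−1,λ) is strictly increasing on ℝ. -/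
open MeasureTheory

/-!
Write `u_l` for the solution with coupling `l`. Any two of these solutions agree to first order at
the right end point `b`, so Lagrange's identity for the Wronskian reads
`R_l(a) R_m(a) sin (φ_m(a) - φ_l(a)) = (m - l) ∫ t in a..b, f t * u_l t * u_m t`.
A Grönwall estimate with an integrable kernel gives `u_m → u_l` uniformly on `[a, b]` as `m → l`,
so dividing by `m - l` and letting `m → l` yields the derivative of the phase. It is positive
because the derivative of a nontrivial solution does not vanish at a zero, so the zeros are
isolated and form a null set.
-/

open Set Filter Topology intervalIntegral

lemma intervalIntegrable_of_locallyIntegrable_s14 {q : ℝ → ℝ} (hq : LocallyIntegrable q) (a b : ℝ) :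
    IntervalIntegrable q volume a b :=
  (hq.integrableOn_isCompact isCompact_uIcc).intervalIntegrable

lemma locallyIntegrable_of_abs_le_s14 {q : ℝ → ℝ} {B : ℝ} (hq : Measurable q) (hB : ∀ x, |q x| ≤ B) :
    LocallyIntegrable q :=
  (locallyIntegrable_const B).mono hq.aestronglyMeasurable
    (.of_forall fun x => (hB x).trans (le_abs_self B))

lemma absolutelyContinuousOnInterval_comp_of_contDiff {G F : ℝ → ℝ} {a b : ℝ}
    (hG : ContDiff ℝ 1 G) (hF : AbsolutelyContinuousOnInterval F a b) :
    AbsolutelyContinuousOnInterval (fun x => G (F x)) a b := by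
  obtain ⟨B, hB⟩ := hF.exists_bound
  obtain ⟨K, hK⟩ := hG.contDiffOn.exists_lipschitzOnWith one_ne_zero
    (convex_closedBall (0 : ℝ) B) (isCompact_closedBall 0 B)
  have hball : ∀ x ∈ uIcc a b, F x ∈ Metric.closedBall 0 B := fun x hx => by
    simpa using hB x hx
  refine squeeze_zero' (.of_forall fun E => Finset.sum_nonneg fun i _ => dist_nonneg) ?_
    (by simpa using Tendsto.const_mul (K : ℝ) hF)
  filter_upwards [mem_inf_of_right (mem_principal_self _)] with E hE
  rw [Finset.mul_sum]
  exact Finset.sum_le_sum fun i hi =>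
    hK.dist_le_mul _ (hball _ (hE.1 i hi).1) _ (hball _ (hE.1 i hi).2)

lemma integral_eq_sub_of_absolutelyContinuousOnInterval {F F' : ℝ → ℝ} {a b : ℝ}
    (hF : AbsolutelyContinuousOnInterval F a b)
    (hF' : ∀ᵐ x, x ∈ uIcc a b → HasDerivAt F (F' x) x) :
    ∫ x in a..b, F' x = F b - F a := by
  rw [← hF.integral_deriv_eq_sub]
  refine integral_congr_ae ?_
  filter_upwards [hF'] with x hx hxab
  exact (hx (uIoc_subset_uIcc hxab)).deriv.symm

section Primitive

variable {F h : ℝ → ℝ} {a b c : ℝ}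

lemma absolutelyContinuousOnInterval_of_eq_add_integral
    (hF : ∀ x, F x = F c + ∫ t in c..x, h t) (hh : IntervalIntegrable h volume a b)
    (hc : c ∈ uIcc a b) : AbsolutelyContinuousOnInterval F a b := by
  have hconst : AbsolutelyContinuousOnInterval (fun _ => F c) a b :=
    contDiffOn_const.absolutelyContinuousOnInterval
  rw [funext hF]
  exact hconst.fun_add (hh.absolutelyContinuousOnInterval_intervalIntegral hc)

lemma ae_hasDerivAt_of_eq_add_integral
    (hF : ∀ x, F x = F c + ∫ t in c..x, h t) (hh : IntervalIntegrable h volume a b)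
    (hc : c ∈ uIcc a b) : ∀ᵐ x, x ∈ uIcc a b → HasDerivAt F (h x) x := by
  rw [funext hF]
  filter_upwards [hh.ae_hasDerivAt_integral] with x hx hxab
  exact (hx hxab c hc).const_add _

lemma abs_le_add_integral_abs_of_eq_add_integral
    (hF : F a = F b + ∫ t in b..a, h t) (hab : a ≤ b) :
    |F a| ≤ |F b| + ∫ t in a..b, |h t| := by
  rw [hF, integral_symm, ← sub_eq_add_neg]
  exact (abs_sub _ _).trans (by gcongr; exact abs_integral_le_integral_abs hab)

end Primitive

lemma le_mul_exp_integral_of_le_add_integral {N k : ℝ → ℝ} {a b ε : ℝ} (hab : a ≤ b)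
    (hN : ContinuousOn N (Icc a b)) (hk : IntervalIntegrable k volume a b)
    (hk0 : ∀ x ∈ Icc a b, 0 ≤ k x)
    (hle : ∀ x ∈ Icc a b, N x ≤ ε + ∫ t in x..b, k t * N t) :
    N a ≤ ε * Real.exp (∫ t in a..b, k t) := by
  rw [← uIcc_of_le hab] at hN hk0 hle
  set M : ℝ → ℝ := fun x => ε + ∫ t in b..x, -(k t * N t) with hM
  set L : ℝ → ℝ := fun x => ∫ t in b..x, k t with hL
  have hNM : ∀ x ∈ uIcc a b, N x ≤ M x := fun x hx => by
    simpa only [hM, intervalIntegral.integral_neg, ← integral_symm] using hle x hx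
  have hkN : IntervalIntegrable (fun t => -(k t * N t)) volume a b :=
    (hk.mul_continuousOn hN).neg
  have hMint : ∀ x, M x = M b + ∫ t in b..x, -(k t * N t) := by simp [hM]
  have hLint : ∀ x, L x = L b + ∫ t in b..x, k t := by simp [hL]
  have hac : AbsolutelyContinuousOnInterval (fun x => M x * Real.exp (L x)) a b :=
    (absolutelyContinuousOnInterval_of_eq_add_integral hMint hkN right_mem_uIcc).fun_mul
      (absolutelyContinuousOnInterval_comp_of_contDiff Real.contDiff_exp
        (absolutelyContinuousOnInterval_of_eq_add_integral hLint hk right_mem_uIcc))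
  have hderiv : ∀ᵐ x, x ∈ uIcc a b → HasDerivAt (fun x => M x * Real.exp (L x))
      (k x * (M x - N x) * Real.exp (L x)) x := by
    filter_upwards [ae_hasDerivAt_of_eq_add_integral hMint hkN right_mem_uIcc,
      ae_hasDerivAt_of_eq_add_integral hLint hk right_mem_uIcc] with x hMx hLx hx
    refine ((hMx hx).mul (hLx hx).exp).congr_deriv ?_
    ring
  have hmono : M a * Real.exp (L a) ≤ M b * Real.exp (L b) := by
    rw [← sub_nonneg, ← integral_eq_sub_of_absolutelyContinuousOnInterval hac hderiv]
    refine integral_nonneg hab fun x hx => ?_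
    rw [← uIcc_of_le hab] at hx
    exact mul_nonneg (mul_nonneg (hk0 x hx) (sub_nonneg.2 (hNM x hx))) (Real.exp_nonneg _)
  calc
    N a ≤ M a := hNM a left_mem_uIcc
    _ = M a * Real.exp (L a) * Real.exp (-L a) := by
      rw [mul_assoc, ← Real.exp_add, add_neg_cancel, Real.exp_zero, mul_one]
    _ ≤ M b * Real.exp (L b) * Real.exp (-L a) := by gcongr
    _ = ε * Real.exp (∫ t in a..b, k t) := by simp [hM, hL, ← integral_symm]

lemma abs_add_abs_mul_add_le (q r z w : ℝ) :
    |w| + |q * z + r| ≤ |r| + (1 + |q|) * (|z| + |w|) := by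
  have hsum : |q * z + r| ≤ |q| * |z| + |r| := (abs_add_le _ _).trans_eq (by rw [abs_mul])
  nlinarith [abs_nonneg z, mul_nonneg (abs_nonneg q) (abs_nonneg w)]

section LinearSystem

variable {q r z w : ℝ → ℝ} {a b : ℝ}

lemma abs_add_abs_le_add_integral (hab : a ≤ b)
    (hq : IntervalIntegrable q volume a b) (hr : IntervalIntegrable r volume a b)
    (hz : Continuous z) (hw : Continuous w)
    (hza : z a = z b + ∫ t in b..a, w t)
    (hwa : w a = w b + ∫ t in b..a, (q t * z t + r t)) :
    |z a| + |w a| ≤ |z b| + |w b| + (∫ t in a..b, |r t|) +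
      ∫ t in a..b, (1 + |q t|) * (|z t| + |w t|) := by
  have hw_int : IntervalIntegrable (fun t => |w t|) volume a b := hw.abs.intervalIntegrable _ _
  have hw'_int : IntervalIntegrable (fun t => |q t * z t + r t|) volume a b :=
    ((hq.mul_continuousOn hz.continuousOn).add hr).abs
  have hN_int : IntervalIntegrable (fun t => (1 + |q t|) * (|z t| + |w t|)) volume a b :=
    (intervalIntegrable_const.add hq.abs).mul_continuousOn (hz.abs.add hw.abs).continuousOn
  calc
    |z a| + |w a| ≤ (|z b| + ∫ t in a..b, |w t|) + (|w b| + ∫ t in a..b, |q t * z t + r t|) :=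
      add_le_add (abs_le_add_integral_abs_of_eq_add_integral hza hab)
        (abs_le_add_integral_abs_of_eq_add_integral hwa hab)
    _ = |z b| + |w b| + ∫ t in a..b, (|w t| + |q t * z t + r t|) := by
      rw [integral_add hw_int hw'_int]
      ring
    _ ≤ |z b| + |w b| + ∫ t in a..b, (|r t| + (1 + |q t|) * (|z t| + |w t|)) := by
      gcongr
      exact integral_mono_on hab (hw_int.add hw'_int) (hr.abs.add hN_int)
        fun t _ => abs_add_abs_mul_add_le _ _ _ _
    _ = _ := by rw [integral_add hr.abs hN_int, ← add_assoc]

lemma abs_add_abs_le_mul_exp_integral (hab : a ≤ b)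
    (hq : IntervalIntegrable q volume a b) (hr : IntervalIntegrable r volume a b)
    (hw : Continuous w) (hzw : ∀ x, z x = z b + ∫ t in b..x, w t)
    (hwz : ∀ x, w x = w b + ∫ t in b..x, (q t * z t + r t)) :
    |z a| + |w a| ≤ (|z b| + |w b| + ∫ t in a..b, |r t|) *
      Real.exp (∫ t in a..b, (1 + |q t|)) := by
  have hz : Continuous z := by
    rw [funext hzw]
    exact continuous_const.add (continuous_primitive (fun _ _ => hw.intervalIntegrable _ _) b)
  refine le_mul_exp_integral_of_le_add_integral (N := fun x => |z x| + |w x|) hab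
    (hz.abs.add hw.abs).continuousOn (intervalIntegrable_const.add hq.abs)
    (fun x _ => by positivity) fun x hx => ?_
  have hsub : uIcc x b ⊆ uIcc a b := by
    simpa only [uIcc_of_le hx.2, uIcc_of_le hab] using Icc_subset_Icc_left hx.1
  refine (abs_add_abs_le_add_integral hx.2 (hq.mono_set hsub) (hr.mono_set hsub) hz hw
    (hzw x) (hwz x)).trans ?_
  gcongr
  exact integral_mono_interval hx.1 hx.2 le_rfl (.of_forall fun t => abs_nonneg _) hr.abs

end LinearSystem

/-- A solution of `-u″ + q u = 0` on the line in the sense of Carathéodory, with `v` standing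
for `u′`; the second-order equation is encoded by the integral equation for `v`, so that `q` need
only be locally integrable. -/
structure IsSchrodingerSolution_s14 (q u v : ℝ → ℝ) : Prop where
  hasDerivAt : ∀ x, HasDerivAt u (v x) x
  eq_add_integral : ∀ x y, v x = v y + ∫ t in y..x, q t * u t

namespace IsSchrodingerSolution_s14

variable {q q₁ q₂ u u₁ u₂ v v₁ v₂ : ℝ → ℝ} {a b : ℝ}

lemma zero (q : ℝ → ℝ) : IsSchrodingerSolution_s14 q 0 0 where
  hasDerivAt _ := hasDerivAt_const _ _
  eq_add_integral _ _ := by simp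

lemma continuous_s14 (h : IsSchrodingerSolution_s14 q u v) : Continuous u :=
  continuous_iff_continuousAt.2 fun x => (h.hasDerivAt x).continuousAt

lemma intervalIntegrable_mul_s14 (h : IsSchrodingerSolution_s14 q u v) (hq : LocallyIntegrable q)
    (a b : ℝ) : IntervalIntegrable (fun t => q t * u t) volume a b :=
  (intervalIntegrable_of_locallyIntegrable_s14 hq a b).mul_continuousOn h.continuous_s14.continuousOn

lemma continuous_deriv_s14 (h : IsSchrodingerSolution_s14 q u v) (hq : LocallyIntegrable q) :
    Continuous v := by
  rw [funext fun x => h.eq_add_integral x 0]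
  exact continuous_const.add (continuous_primitive (h.intervalIntegrable_mul_s14 hq) 0)

lemma eq_add_integral_deriv (h : IsSchrodingerSolution_s14 q u v) (hq : LocallyIntegrable q)
    (x y : ℝ) : u x = u y + ∫ t in y..x, v t := by
  rw [integral_eq_sub_of_hasDerivAt (fun t _ => h.hasDerivAt t)
    ((h.continuous_deriv_s14 hq).intervalIntegrable _ _), add_sub_cancel]

lemma absolutelyContinuousOnInterval (h : IsSchrodingerSolution_s14 q u v)
    (hq : LocallyIntegrable q) (a b : ℝ) : AbsolutelyContinuousOnInterval u a b :=
  absolutelyContinuousOnInterval_of_eq_add_integral (fun x => h.eq_add_integral_deriv hq x a)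
    ((h.continuous_deriv_s14 hq).intervalIntegrable _ _) left_mem_uIcc

lemma absolutelyContinuousOnInterval_deriv_s14 (h : IsSchrodingerSolution_s14 q u v)
    (hq : LocallyIntegrable q) (a b : ℝ) : AbsolutelyContinuousOnInterval v a b :=
  absolutelyContinuousOnInterval_of_eq_add_integral (fun x => h.eq_add_integral x a)
    (h.intervalIntegrable_mul_s14 hq a b) left_mem_uIcc

lemma ae_hasDerivAt_deriv_s14 (h : IsSchrodingerSolution_s14 q u v) (hq : LocallyIntegrable q)
    (a b : ℝ) : ∀ᵐ x, x ∈ uIcc a b → HasDerivAt v (q x * u x) x :=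
  ae_hasDerivAt_of_eq_add_integral (fun x => h.eq_add_integral x a)
    (h.intervalIntegrable_mul_s14 hq a b) left_mem_uIcc

lemma wronskian_sub_wronskian (h₁ : IsSchrodingerSolution_s14 q₁ u₁ v₁)
    (h₂ : IsSchrodingerSolution_s14 q₂ u₂ v₂) (hq₁ : LocallyIntegrable q₁)
    (hq₂ : LocallyIntegrable q₂) (a b : ℝ) :
    (u₁ b * v₂ b - v₁ b * u₂ b) - (u₁ a * v₂ a - v₁ a * u₂ a) =
      ∫ t in a..b, (q₂ t - q₁ t) * (u₁ t * u₂ t) := by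
  refine (integral_eq_sub_of_absolutelyContinuousOnInterval
    (F := fun x => u₁ x * v₂ x - v₁ x * u₂ x) ?_ ?_).symm
  · exact ((h₁.absolutelyContinuousOnInterval hq₁ a b).fun_mul
      (h₂.absolutelyContinuousOnInterval_deriv_s14 hq₂ a b)).fun_sub
      ((h₁.absolutelyContinuousOnInterval_deriv_s14 hq₁ a b).fun_mul
      (h₂.absolutelyContinuousOnInterval hq₂ a b))
  · filter_upwards [h₁.ae_hasDerivAt_deriv_s14 hq₁ a b, h₂.ae_hasDerivAt_deriv_s14 hq₂ a b]
      with x hv₁ hv₂ hx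
    refine (((h₁.hasDerivAt x).mul (hv₂ hx)).sub ((hv₁ hx).mul (h₂.hasDerivAt x))).congr_deriv ?_
    ring

lemma abs_sub_add_abs_sub_le (h₁ : IsSchrodingerSolution_s14 q₁ u₁ v₁)
    (h₂ : IsSchrodingerSolution_s14 q₂ u₂ v₂) (hq₁ : LocallyIntegrable q₁)
    (hq₂ : LocallyIntegrable q₂) (hab : a ≤ b) :
    |u₂ a - u₁ a| + |v₂ a - v₁ a| ≤
      (|u₂ b - u₁ b| + |v₂ b - v₁ b| + ∫ t in a..b, |(q₂ t - q₁ t) * u₁ t|) *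
        Real.exp (∫ t in a..b, (1 + |q₂ t|)) := by
  refine abs_add_abs_le_mul_exp_integral (z := fun x => u₂ x - u₁ x) (w := fun x => v₂ x - v₁ x)
    hab (intervalIntegrable_of_locallyIntegrable_s14 hq₂ a b)
    ((intervalIntegrable_of_locallyIntegrable_s14 (hq₂.sub hq₁) a b).mul_continuousOn
      h₁.continuous_s14.continuousOn)
    ((h₂.continuous_deriv_s14 hq₂).sub (h₁.continuous_deriv_s14 hq₁)) (fun x => ?_) fun x => ?_
  · rw [h₂.eq_add_integral_deriv hq₂ x b, h₁.eq_add_integral_deriv hq₁ x b,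
      integral_sub ((h₂.continuous_deriv_s14 hq₂).intervalIntegrable _ _)
        ((h₁.continuous_deriv_s14 hq₁).intervalIntegrable _ _)]
    ring
  · have hsplit : ∀ t, q₂ t * (u₂ t - u₁ t) + (q₂ t - q₁ t) * u₁ t =
        q₂ t * u₂ t - q₁ t * u₁ t := fun t => by ring
    simp only [hsplit]
    rw [h₂.eq_add_integral x b, h₁.eq_add_integral x b,
      integral_sub (h₂.intervalIntegrable_mul_s14 hq₂ _ _) (h₁.intervalIntegrable_mul_s14 hq₁ _ _)]
    ring

lemma eq_zero_of_le (h : IsSchrodingerSolution_s14 q u v) (hq : LocallyIntegrable q)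
    (hab : a ≤ b) (hu : u b = 0) (hv : v b = 0) : u a = 0 ∧ v a = 0 := by
  have hle := (zero q).abs_sub_add_abs_sub_le h hq hq hab
  simp only [Pi.zero_apply, sub_zero, hu, hv, abs_zero, add_zero, mul_zero,
    intervalIntegral.integral_zero, zero_mul] at hle
  exact ⟨abs_nonpos_iff.1 (by linarith [abs_nonneg (v a)]),
    abs_nonpos_iff.1 (by linarith [abs_nonneg (u a)])⟩

lemma countable_zeros (h : IsSchrodingerSolution_s14 q u v) (hq : LocallyIntegrable q)
    (ha : u a ≠ 0 ∨ v a ≠ 0) : {x | a ≤ x ∧ u x = 0}.Countable := by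
  have hdiscrete : IsDiscrete {x | a ≤ x ∧ u x = 0} := by
    refine isDiscrete_iff_nhdsNE.2 fun x ⟨hax, hux⟩ => ?_
    have hvx : v x ≠ 0 := fun hvx => by
      obtain ⟨hua, hva⟩ := h.eq_zero_of_le hq hax hux hvx
      exact ha.elim (· hua) (· hva)
    refine inf_principal_eq_bot.2 ?_
    filter_upwards [(h.hasDerivAt x).eventually_ne hvx (c := 0)] with y hy hy'
    exact hy hy'.2
  exact (HereditarilyLindelofSpace.isLindelof _).countable_of_isDiscrete hdiscrete

lemma integral_mul_sq_pos {f : ℝ → ℝ} (h : IsSchrodingerSolution_s14 q u v)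
    (hq : LocallyIntegrable q) (hab : a < b) (ha : u a ≠ 0 ∨ v a ≠ 0)
    (hf : LocallyIntegrable f) (hf0 : 0 ≤ᵐ[volume.restrict (Ioc a b)] f)
    (hfpos : 0 < volume (Function.support f ∩ Ioc a b)) :
    0 < ∫ t in a..b, f t * u t ^ 2 := by
  rw [← uIoc_of_le hab.le] at hf0
  refine (integral_pos_iff_support_of_nonneg_ae' ?_ ?_).2 ⟨hab, ?_⟩
  · filter_upwards [hf0] with t ht using mul_nonneg ht (sq_nonneg _)
  · exact (intervalIntegrable_of_locallyIntegrable_s14 hf a b).mul_continuousOn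
      (h.continuous_s14.pow 2).continuousOn
  · rw [← measure_sdiff_null ((h.countable_zeros hq ha).measure_zero volume)] at hfpos
    refine hfpos.trans_le (measure_mono ?_)
    rintro x ⟨⟨hfx, hx⟩, hux⟩
    exact ⟨mul_ne_zero hfx (pow_ne_zero 2 fun h0 => hux ⟨hx.1.le, h0⟩), hx⟩

end IsSchrodingerSolution_s14

section Coupling

variable {g f : ℝ → ℝ} {u v : ℝ → ℝ → ℝ} {a b : ℝ}

lemma abs_sub_add_abs_sub_le_coupling (hg : LocallyIntegrable g) (hf : LocallyIntegrable f)
    (hsol : ∀ lam, IsSchrodingerSolution_s14 (fun t => g t + lam * f t) (u · lam) (v · lam))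
    (hu : ∀ l m, u b l = u b m) (hv : ∀ l m, v b l = v b m) (l m : ℝ) {x : ℝ}
    (hx : x ∈ Icc a b) :
    |u x m - u x l| + |v x m - v x l| ≤ |m - l| * (∫ t in a..b, |f t * u t l|) *
      Real.exp ((∫ t in a..b, (1 + |g t|)) + |m| * ∫ t in a..b, |f t|) := by
  have hgint : IntervalIntegrable (fun t => 1 + |g t|) volume a b :=
    intervalIntegrable_const.add (intervalIntegrable_of_locallyIntegrable_s14 hg a b).abs
  have hfint := (intervalIntegrable_of_locallyIntegrable_s14 hf a b).abs
  have hfu : IntervalIntegrable (fun t => |f t * u t l|) volume a b :=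
    ((intervalIntegrable_of_locallyIntegrable_s14 hf a b).mul_continuousOn
      (hsol l).continuous_s14.continuousOn).abs
  have hq : ∀ lam, LocallyIntegrable fun t => g t + lam * f t := fun lam =>
    hg.add (hf.smul lam)
  have hqint : IntervalIntegrable (fun t => 1 + |g t + m * f t|) volume a b :=
    intervalIntegrable_const.add (intervalIntegrable_of_locallyIntegrable_s14 (hq m) a b).abs
  have hforce : ∫ t in x..b, |(g t + m * f t - (g t + l * f t)) * u t l| ≤
      |m - l| * ∫ t in a..b, |f t * u t l| := by
    have hfactor : ∀ t, |(g t + m * f t - (g t + l * f t)) * u t l| =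
        |m - l| * |f t * u t l| := fun t => by rw [← abs_mul]; ring_nf
    simp only [hfactor, intervalIntegral.integral_const_mul]
    gcongr
    exact integral_mono_interval hx.1 hx.2 le_rfl (.of_forall fun t => abs_nonneg _) hfu
  have hrate : ∫ t in x..b, (1 + |g t + m * f t|) ≤
      (∫ t in a..b, (1 + |g t|)) + |m| * ∫ t in a..b, |f t| := by
    rw [← intervalIntegral.integral_const_mul, ← integral_add hgint (hfint.const_mul _)]
    refine (integral_mono_interval hx.1 hx.2 le_rfl
      (.of_forall fun t => by positivity) hqint).trans ?_
    refine integral_mono_on (hx.1.trans hx.2) hqint (hgint.add (hfint.const_mul _)) fun t _ => ?_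
    rw [add_assoc, ← abs_mul]
    gcongr
    exact abs_add_le _ _
  refine ((hsol l).abs_sub_add_abs_sub_le (hsol m) (hq l) (hq m) hx.2).trans ?_
  have hmass : 0 ≤ ∫ t in a..b, |f t * u t l| :=
    intervalIntegral.integral_nonneg (hx.1.trans hx.2) fun t _ => abs_nonneg _
  rw [hu m l, hv m l, sub_self, sub_self, abs_zero, add_zero, zero_add]
  gcongr

lemma tendstoUniformlyOn_coupling (hg : LocallyIntegrable g) (hf : LocallyIntegrable f)
    (hsol : ∀ lam, IsSchrodingerSolution_s14 (fun t => g t + lam * f t) (u · lam) (v · lam))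
    (hu : ∀ l m, u b l = u b m) (hv : ∀ l m, v b l = v b m) (l : ℝ) :
    TendstoUniformlyOn (fun m x => (u x m, v x m)) (fun x => (u x l, v x l)) (𝓝 l)
      (Icc a b) := by
  set bound : ℝ → ℝ := fun m => |m - l| * (∫ t in a..b, |f t * u t l|) *
    Real.exp ((∫ t in a..b, (1 + |g t|)) + |m| * ∫ t in a..b, |f t|) with hbound
  have hbound0 : Tendsto bound (𝓝 l) (𝓝 0) := by
    have hcont : Continuous bound := by fun_prop
    simpa [hbound] using hcont.tendsto l
  refine Metric.tendstoUniformlyOn_iff.2 fun ε hε => ?_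
  filter_upwards [hbound0.eventually_lt_const hε] with m hm x hx
  rw [dist_comm, Prod.dist_eq]
  refine lt_of_le_of_lt ?_ hm
  exact (max_le_add_of_nonneg dist_nonneg dist_nonneg).trans
    (abs_sub_add_abs_sub_le_coupling hg hf hsol hu hv l m hx)

lemma continuousAt_integral_coupling (hf : LocallyIntegrable f) {lam : ℝ}
    (hcont : ∀ m, Continuous (u · m))
    (hunif : TendstoUniformlyOn (fun m x => u x m) (u · lam) (𝓝 lam) (uIcc a b)) :
    ContinuousAt (fun m => ∫ t in a..b, f t * (u t lam * u t m)) lam := by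
  have hfint := intervalIntegrable_of_locallyIntegrable_s14 hf a b
  refine continuousAt_of_dominated_interval
    (bound := fun t => |f t| * (|u t lam| * (|u t lam| + 1)))
    (.of_forall fun m => ?_) ?_ ?_ ?_
  · exact (hfint.mul_continuousOn
      ((hcont lam).mul (hcont m)).continuousOn).aestronglyMeasurable_restrict_uIoc
  · filter_upwards [Metric.tendstoUniformlyOn_iff.1 hunif 1 one_pos] with m hm
    refine .of_forall fun t ht => ?_
    have hdist := hm t (uIoc_subset_uIcc ht)
    rw [dist_comm, Real.dist_eq] at hdist
    rw [Real.norm_eq_abs, abs_mul, abs_mul]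
    gcongr
    linarith [abs_sub_abs_le_abs_sub (u t m) (u t lam)]
  · exact hfint.abs.mul_continuousOn
      ((hcont lam).abs.mul ((hcont lam).abs.add continuous_const)).continuousOn
  · refine .of_forall fun t ht => ?_
    exact continuousAt_const.mul
      (continuousAt_const.mul (hunif.tendsto_at (uIoc_subset_uIcc ht)))

end Coupling

lemma hasDerivAt_sub_mul_of_continuousAt {J : ℝ → ℝ} {l : ℝ} (hJ : ContinuousAt J l) :
    HasDerivAt (fun m => (m - l) * J m) (J l) l := by
  rw [hasDerivAt_iff_tendsto_slope]
  refine (hJ.tendsto.mono_left nhdsWithin_le_nhds).congr' ?_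
  filter_upwards [self_mem_nhdsWithin] with m hm
  rw [slope_def_field, sub_self, zero_mul, sub_zero, mul_div_cancel_left₀ _ (sub_ne_zero.2 hm)]

lemma hasDerivAt_of_hasDerivAt_sin_sub {φ : ℝ → ℝ} {l w : ℝ} (hφ : ContinuousAt φ l)
    (h : HasDerivAt (fun m => Real.sin (φ m - φ l)) w l) : HasDerivAt φ w l := by
  have hsmall : ∀ᶠ m in 𝓝 l, φ m - φ l ∈ Icc (-(Real.pi / 2)) (Real.pi / 2) := by
    refine (hφ.sub continuousAt_const).eventually_mem (Icc_mem_nhds ?_ ?_) <;>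
      simp [Real.pi_pos]
  have harcsin : HasDerivAt Real.arcsin 1 (Real.sin (φ l - φ l)) := by
    simpa using Real.hasDerivAt_arcsin (x := 0) (by norm_num) (by norm_num)
  have hcomp := (harcsin.comp l h).const_add (φ l)
  rw [one_mul] at hcomp
  refine hcomp.congr_of_eventuallyEq ?_
  filter_upwards [hsmall] with m hm
  simp [Real.arcsin_sin hm.1 hm.2]

/-- Prüfer (polar) coordinates, with amplitude `R` and phase `φ`, of a family of pairs `(U, V)`
standing for the values of a solution and of its derivative. The phase is measured from the `V`
axis and determined only modulo `2π`; the parameter `x` may be the space variable or the coupling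
constant. -/
structure IsPruferCoord {X : Type*} (U V R φ : X → ℝ) : Prop where
  pos : ∀ x, 0 < R x
  eq_mul_sin : ∀ x, U x = R x * Real.sin (φ x)
  eq_mul_cos : ∀ x, V x = R x * Real.cos (φ x)

namespace IsPruferCoord

variable {X : Type*} {U V R φ : X → ℝ}

lemma amplitude_eq (h : IsPruferCoord U V R φ) (x : X) :
    R x = √(U x ^ 2 + V x ^ 2) := by
  rw [h.eq_mul_sin, h.eq_mul_cos, mul_pow, mul_pow, ← mul_add, Real.sin_sq_add_cos_sq, mul_one,
    Real.sqrt_sq (h.pos x).le]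

lemma ne_zero_or_ne_zero (h : IsPruferCoord U V R φ) (x : X) :
    U x ≠ 0 ∨ V x ≠ 0 := by
  by_contra! h0
  have := h.pos x
  simp [h.amplitude_eq, h0] at this

lemma continuousAt_amplitude [TopologicalSpace X] {x : X}
    (h : IsPruferCoord U V R φ) (hU : ContinuousAt U x) (hV : ContinuousAt V x) :
    ContinuousAt R x := by
  rw [funext h.amplitude_eq]
  exact ((hU.pow 2).add (hV.pow 2)).sqrt

lemma mul_sin_sub (h : IsPruferCoord U V R φ) (x y : X) :
    R x * R y * Real.sin (φ y - φ x) = V x * U y - U x * V y := by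
  rw [h.eq_mul_sin, h.eq_mul_sin, h.eq_mul_cos, h.eq_mul_cos, Real.sin_sub]
  ring

lemma hasDerivAt_phase {U V R φ J : ℝ → ℝ} {l : ℝ} (h : IsPruferCoord U V R φ)
    (hφ : ContinuousAt φ l) (hU : ContinuousAt U l) (hV : ContinuousAt V l)
    (hJ : ContinuousAt J l) (hUVJ : ∀ m, V l * U m - U l * V m = (m - l) * J m) :
    HasDerivAt φ ((R l ^ 2)⁻¹ * J l) l := by
  have hR0 : ∀ m, R m ≠ 0 := fun m => (h.pos m).ne'
  have hsin : (fun m => Real.sin (φ m - φ l)) = fun m => (m - l) * (J m / (R l * R m)) := by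
    funext m
    rw [mul_div_assoc', ← hUVJ, ← h.mul_sin_sub, mul_div_cancel_left₀]
    exact mul_ne_zero (hR0 l) (hR0 m)
  refine hasDerivAt_of_hasDerivAt_sin_sub hφ ?_
  rw [hsin, inv_mul_eq_div, sq]
  exact hasDerivAt_sub_mul_of_continuousAt (hJ.div
    (continuousAt_const.mul (h.continuousAt_amplitude hU hV)) (mul_ne_zero (hR0 l) (hR0 l)))

end IsPruferCoord

lemma hasDerivAt_phase_coupling {g f : ℝ → ℝ} {u v : ℝ → ℝ → ℝ} {R φ : ℝ → ℝ} {a b : ℝ}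
    (hg : LocallyIntegrable g) (hf : LocallyIntegrable f) (hab : a ≤ b)
    (hsol : ∀ lam, IsSchrodingerSolution_s14 (fun t => g t + lam * f t) (u · lam) (v · lam))
    (hu : ∀ l m, u b l = u b m) (hv : ∀ l m, v b l = v b m)
    (hpolar : IsPruferCoord (u a) (v a) R φ) {l : ℝ} (hφ : ContinuousAt φ l) :
    HasDerivAt φ ((R l ^ 2)⁻¹ * ∫ t in a..b, f t * u t l ^ 2) l := by
  have hunif := tendstoUniformlyOn_coupling (a := a) hg hf hsol hu hv l
  have hcont_a : ContinuousAt (fun m => (u a m, v a m)) l :=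
    hunif.tendsto_at (left_mem_Icc.2 hab)
  have hunif_u : TendstoUniformlyOn (fun m x => u x m) (u · l) (𝓝 l) (uIcc a b) := by
    rw [uIcc_of_le hab]
    exact uniformContinuous_fst.comp_tendstoUniformlyOn hunif
  have hwronskian : ∀ m, v a l * u a m - u a l * v a m =
      (m - l) * ∫ t in a..b, f t * (u t l * u t m) := fun m => by
    have h := (hsol l).wronskian_sub_wronskian (hsol m) (hg.add (hf.smul l))
      (hg.add (hf.smul m)) a b
    rw [← intervalIntegral.integral_const_mul]
    calc
      v a l * u a m - u a l * v a m =
          (u b l * v b m - v b l * u b m) - (u a l * v a m - v a l * u a m) := by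
        rw [hu m l, hv m l]
        ring
      _ = ∫ t in a..b, (m - l) * (f t * (u t l * u t m)) := by
        rw [h]
        exact integral_congr fun t _ => by ring
  simpa only [sq] using hpolar.hasDerivAt_phase hφ hcont_a.fst hcont_a.snd
    (continuousAt_integral_coupling hf (fun m => (hsol m).continuous_s14) hunif_u) hwronskian

theorem prufer_phase_strict_mono_coupling_general {g f : ℝ → ℝ} {u v : ℝ → ℝ → ℝ}
    {R φ : ℝ → ℝ} {a b : ℝ} (hab : a < b)
    (hg : LocallyIntegrable g) (hf : LocallyIntegrable f)
    (hf0 : 0 ≤ᵐ[volume.restrict (Ioc a b)] f)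
    (hfpos : 0 < volume (Function.support f ∩ Ioc a b))
    (hsol : ∀ lam, IsSchrodingerSolution_s14 (fun t => g t + lam * f t) (u · lam) (v · lam))
    (hu : ∀ l m, u b l = u b m) (hv : ∀ l m, v b l = v b m)
    (hpolar : IsPruferCoord (u a) (v a) R φ) (hφ : Continuous φ) :
    (∀ lam : ℝ,
      HasDerivAt φ ((R lam ^ 2)⁻¹ * ∫ t in a..b, f t * u t lam ^ 2) lam ∧
      0 < (R lam ^ 2)⁻¹ * ∫ t in a..b, f t * u t lam ^ 2) ∧
    StrictMono φ := by
  have hderiv : ∀ lam, HasDerivAt φ ((R lam ^ 2)⁻¹ * ∫ t in a..b, f t * u t lam ^ 2) lam :=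
    fun lam => hasDerivAt_phase_coupling hg hf hab.le hsol hu hv hpolar hφ.continuousAt
  have hpos : ∀ lam, 0 < (R lam ^ 2)⁻¹ * ∫ t in a..b, f t * u t lam ^ 2 := fun lam =>
    mul_pos (inv_pos.2 (pow_pos (hpolar.pos lam) 2))
      ((hsol lam).integral_mul_sq_pos (hg.add (hf.smul lam)) hab
        (hpolar.ne_zero_or_ne_zero lam) hf hf0 hfpos)
  exact ⟨fun lam => ⟨hderiv lam, hpos lam⟩,
    strictMono_of_deriv_pos fun lam => (hderiv lam).deriv ▸ hpos lam⟩

/-- The Prüfer phase at `-1` is differentiable in the coupling constant with strictly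
positive derivative `R(-1,λ)⁻² ∫_{-1}^0 f u(·,λ)²`; in particular it is strictly
increasing in `λ`. -/
theorem prufer_phase_strict_mono_coupling (g f : ℝ → ℝ)
    (hgm : Measurable g) (hgb : ∃ Cg : ℝ, ∀ x : ℝ, |g x| ≤ Cg)
    (hfm : Measurable f) (c C : ℝ) (hc : 0 < c) (hcC : c ≤ C)
    (a b : ℝ) (ha : -1 ≤ a) (hab : a < b) (hb : b ≤ 0)
    (hfl : ∀ x : ℝ, Set.indicator (Set.Icc a b) (fun _ => c) x ≤ f x)
    (hfu : ∀ x : ℝ, f x ≤ Set.indicator (Set.Icc (-1 : ℝ) 0) (fun _ => C) x)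
    (α : ℝ) (u v R φ : ℝ → ℝ → ℝ)
    (hu : ∀ (lam : ℝ) (x : ℝ), HasDerivAt (fun s => u s lam) (v x lam) x)
    (hv : ∀ (lam : ℝ) (x y : ℝ),
      v x lam = v y lam + ∫ t in y..x, (g t + lam * f t) * u t lam)
    (hu0 : ∀ lam : ℝ, u 0 lam = Real.sin α)
    (hv0 : ∀ lam : ℝ, v 0 lam = Real.cos α)
    (hR : ∀ x lam : ℝ, 0 < R x lam)
    (huR : ∀ x lam : ℝ, u x lam = R x lam * Real.sin (φ x lam))
    (hvR : ∀ x lam : ℝ, v x lam = R x lam * Real.cos (φ x lam))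
    (hφ0 : ∀ lam : ℝ, φ 0 lam = α)
    (hφcont : Continuous fun p : ℝ × ℝ => φ p.1 p.2) :
    (∀ lam : ℝ,
      HasDerivAt (fun l => φ (-1) l)
        ((R (-1) lam ^ 2)⁻¹ * ∫ t in (-1 : ℝ)..0, f t * u t lam ^ 2) lam ∧
      0 < (R (-1) lam ^ 2)⁻¹ * ∫ t in (-1 : ℝ)..0, f t * u t lam ^ 2) ∧
    StrictMono fun lam : ℝ => φ (-1) lam := by
  have hf0 : ∀ x, 0 ≤ f x := fun x => (indicator_nonneg (fun _ _ => hc.le) x).trans (hfl x)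
  have hfC : ∀ x, |f x| ≤ C := fun x => (abs_of_nonneg (hf0 x)).trans_le
    ((hfu x).trans (indicator_le_self' (fun _ _ => hc.le.trans hcC) x))
  have hsupport : Ioc a b ⊆ Function.support f ∩ Ioc (-1) 0 := fun x hx => by
    have hcf := hfl x
    rw [indicator_of_mem (Ioc_subset_Icc_self hx)] at hcf
    exact ⟨(hc.trans_le hcf).ne', Ioc_subset_Ioc ha hb hx⟩
  have hfpos : 0 < volume (Function.support f ∩ Ioc (-1) 0) :=
    (by simpa using hab : 0 < volume (Ioc a b)).trans_le (measure_mono hsupport)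
  exact prufer_phase_strict_mono_coupling_general (by norm_num)
    (hgb.elim fun _ hCg => locallyIntegrable_of_abs_le_s14 hgm hCg)
    (locallyIntegrable_of_abs_le_s14 hfm hfC) (.of_forall hf0) hfpos
    (fun lam => ⟨hu lam, hv lam⟩) (fun l m => (hu0 l).trans (hu0 m).symm)
    (fun l m => (hv0 l).trans (hv0 m).symm) ⟨hR (-1), huR (-1), hvR (-1)⟩
    (hφcont.comp (.prodMk_right (-1)))
end

section
/- Let N be a positive integer and let 𝕋_N := ℝ/(2πN·ℤ) carry Lebesgue (Haar) measure. For n ∈ {0, …, 2N−1} let τ_n : L²(𝕋_N; ℂ) → L²(𝕋_N; ℂ) be the (measure-preserving, hence isometric) translation (τ_n h)(x) = h(x + πn), and let ρ : L²(𝕋_N; ℂ) → L²((0, π); ℂ) be the restriction of (a representative of) an L² class to the interval (0, π). Define U : L²(𝕋_N; ℂ) → ⊕_{j=0}^{2N−1} L²((0, π); ℂ) (the Hilbert space direct sum) by (U h)_j := (2N)^{−1/2} · Σ_{n=0}^{2N−1} e^{−iπjn/N} · ρ(τ_n h). Then U is a surjective linear isometry (a unitary operator) from L²(𝕋_N; ℂ)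 onto ⊕_{j=0}^{2N−1} L²((0, π); ℂ). -/
open MeasureTheory

/-!
The translates `h(· + an)`, `n < M`, restricted to `(0, a)` are the pieces of `h` on the `M`
consecutive arcs that tile a circle of circumference `aM`, so `h ↦ (h(· + an))ₙ` identifies `L²` of
the circle with `M` copies of `L²(0, a)`. Mixing the pieces pointwise by a unitary `M × M` matrix
changes neither norms nor surjectivity. For the theorem, `M = 2N`, `a = π`, and the matrix
`(2N)^{-1/2} (ζ^{jn})` with `ζ = e^{-iπ/N}` is unitary because `ζ` is a primitive `2N`-th root of
unity.
-/

open Finset Matrix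
open scoped ENNReal Real

section UnitaryMatrix

variable {𝕜 ι κ : Type*} [RCLike 𝕜] [Fintype ι]

theorem sum_sq_norm_mulVec_of_mem_unitaryGroup [DecidableEq ι] {A : Matrix ι ι 𝕜}
    (hA : A ∈ unitaryGroup ι 𝕜) (v : ι → 𝕜) : ∑ i, ‖(A *ᵥ v) i‖ ^ 2 = ∑ i, ‖v i‖ ^ 2 := by
  have hdot (w : ι → 𝕜) : star w ⬝ᵥ w = ((∑ i, ‖w i‖ ^ 2 : ℝ) : 𝕜) := by
    simp [dotProduct, RCLike.conj_mul]
  apply RCLike.ofReal_injective (K := 𝕜)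
  rw [← hdot, ← hdot, star_mulVec, dotProduct_mulVec, vecMul_vecMul, ← star_eq_conjTranspose,
    mem_unitaryGroup_iff'.1 hA, vecMul_one]

variable {X : Type*} [MeasurableSpace X] {μ : Measure X}

theorem memLp_mulVec {p : ℝ≥0∞} (A : Matrix κ ι 𝕜) {f : ι → X → 𝕜} (hf : ∀ i, MemLp (f i) p μ)
    (k : κ) : MemLp (fun x ↦ (A *ᵥ fun i ↦ f i x) k) p μ :=
  memLp_finsetSum _ fun i _ ↦ (hf i).const_mul (A k i)

theorem sum_integral_sq_norm_mulVec_of_mem_unitaryGroup [DecidableEq ι] {A : Matrix ι ι 𝕜}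
    (hA : A ∈ unitaryGroup ι 𝕜) {f : ι → X → 𝕜} (hf : ∀ i, MemLp (f i) 2 μ) :
    ∑ j, ∫ x, ‖(A *ᵥ fun i ↦ f i x) j‖ ^ 2 ∂μ = ∑ i, ∫ x, ‖f i x‖ ^ 2 ∂μ := by
  rw [← integral_finsetSum _ fun j _ ↦ (memLp_mulVec A hf j).integrable_norm_pow two_ne_zero,
    ← integral_finsetSum _ fun i _ ↦ (hf i).integrable_norm_pow two_ne_zero]
  simp only [sum_sq_norm_mulVec_of_mem_unitaryGroup hA]

end UnitaryMatrix

section FourierMatrix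

theorem sum_pow_mul_inv_pow_eq_ite {F : Type*} [Field F] {ζ : F} {M : ℕ}
    (hζ : IsPrimitiveRoot ζ M) (j k : Fin M) :
    ∑ n : Fin M, ζ ^ (j * n : ℕ) * (ζ ^ (k * n : ℕ))⁻¹ = if j = k then (M : F) else 0 := by
  have hζ0 : ζ ≠ 0 := hζ.ne_zero (Nat.ne_zero_of_lt j.isLt)
  set ω : F := ζ ^ (j : ℕ) / ζ ^ (k : ℕ)
  have hterm (n : ℕ) : ζ ^ (j * n : ℕ) * (ζ ^ (k * n : ℕ))⁻¹ = ω ^ n := by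
    rw [div_pow, ← pow_mul, ← pow_mul, div_eq_mul_inv]
  simp only [hterm, Fin.sum_univ_eq_sum_range (ω ^ ·)]
  split_ifs with hjk
  · simp [ω, hjk, hζ0]
  · have hω : ω ≠ 1 := fun h ↦
      hjk (Fin.ext (hζ.pow_inj j.isLt k.isLt (div_eq_one_iff_eq (pow_ne_zero _ hζ0) |>.1 h)))
    have hωM : ω ^ M = 1 := by
      simp only [ω, div_pow, ← pow_mul, mul_comm _ M, pow_mul ζ M, hζ.pow_eq_one, one_pow, div_one]
    rw [geom_sum_eq hω, hωM, sub_self, zero_div]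

/-- Entries of the discrete Fourier transform of order `M`, normalized to be unitary when `ζ` is a
primitive `M`-th root of unity. The indices run over all of `ℕ`; only those below `M` are matrix
indices. -/
noncomputable def dftKernel (M : ℕ) (ζ : ℂ) (j n : ℕ) : ℂ :=
  ((√M)⁻¹ : ℝ) * ζ ^ (j * n)

theorem of_dftKernel_mem_unitaryGroup {M : ℕ} {ζ : ℂ} (hζ : IsPrimitiveRoot ζ M) :
    (of fun j n : Fin M ↦ dftKernel M ζ j n) ∈ unitaryGroup (Fin M) ℂ := by
  rw [mem_unitaryGroup_iff]
  ext j k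
  have hM : M ≠ 0 := Nat.ne_zero_of_lt j.isLt
  have hstar : star ζ = ζ⁻¹ := (Complex.inv_eq_conj (hζ.norm'_eq_one hM)).symm
  have hnormalize : (((√M)⁻¹ : ℝ) : ℂ) * ((√M)⁻¹ : ℝ) = (M : ℂ)⁻¹ := by
    rw [← Complex.ofReal_mul, ← mul_inv, Real.mul_self_sqrt M.cast_nonneg, Complex.ofReal_inv,
      Complex.ofReal_natCast]
  have hterm (n : Fin M) : dftKernel M ζ j n * star (dftKernel M ζ k n) =
      (M : ℂ)⁻¹ * (ζ ^ (j * n : ℕ) * (ζ ^ (k * n : ℕ))⁻¹) := by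
    rw [dftKernel, dftKernel, star_mul', star_pow, hstar, inv_pow, Complex.star_def,
      Complex.conj_ofReal, ← hnormalize]
    ring
  calc ∑ n : Fin M, dftKernel M ζ j n * star (dftKernel M ζ k n)
      = (M : ℂ)⁻¹ * if j = k then (M : ℂ) else 0 := by
        simp only [hterm, ← mul_sum, sum_pow_mul_inv_pow_eq_ite hζ]
    _ = (1 : Matrix (Fin M) (Fin M) ℂ) j k := by
        rw [one_apply, mul_ite, mul_zero, inv_mul_cancel₀ (Nat.cast_ne_zero.2 hM)]

theorem isPrimitiveRoot_exp_neg_I_mul_pi_div {N : ℕ} (hN : N ≠ 0) :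
    IsPrimitiveRoot (Complex.exp (-(Complex.I * π) / N)) (2 * N) := by
  have hexponent : -(Complex.I * π) / N = -(2 * π * Complex.I / (2 * N : ℕ)) := by
    push_cast
    field_simp
  rw [hexponent, Complex.exp_neg]
  exact (Complex.isPrimitiveRoot_exp (2 * N) (by positivity)).inv

theorem dftKernel_exp_neg_I_mul_pi_div (N j n : ℕ) :
    dftKernel (2 * N) (Complex.exp (-(Complex.I * π) / N)) j n =
      ((√(2 * N))⁻¹ : ℝ) * Complex.exp (-(Complex.I * π * j * n) / N) := by
  rw [dftKernel, ← Complex.exp_nat_mul]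
  push_cast
  congr 2
  ring

end FourierMatrix

section Circle

theorem le_mul_natCast_of_pos {a : ℝ} {M : ℕ} (h : 0 < a * M) : a ≤ a * M := by
  have ha : 0 < a := pos_of_mul_pos_left h M.cast_nonneg
  have hM : 0 < M := Nat.cast_pos.1 (pos_of_mul_pos_right h ha.le)
  exact le_mul_of_one_le_right ha.le (Nat.one_le_cast.2 hM)

variable {E : Type*} [NormedAddCommGroup E] {T a : ℝ} [Fact (0 < T)] {M : ℕ} {p : ℝ≥0∞}

theorem memLp_translate {h : AddCircle T → E} (hh : MemLp h p) (c t : ℝ) :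
    MemLp (fun x : ℝ ↦ h (x + c : ℝ)) p (volume.restrict (Set.Ioc t (t + T))) :=
  hh.comp_measurePreserving <|
    (measurePreserving_add_right volume (c : AddCircle T)).comp (AddCircle.measurePreserving_mk T t)

theorem memLp_translate_restrict_Ioo (haT : a ≤ T) {h : AddCircle T → E} (hh : MemLp h p) (c : ℝ) :
    MemLp (fun x : ℝ ↦ h (x + c : ℝ)) p (volume.restrict (Set.Ioo 0 a)) :=
  (memLp_translate hh c 0).mono_measure <| Measure.restrict_mono
    (Set.Ioo_subset_Ioc_self.trans (Set.Ioc_subset_Ioc_right (by rwa [zero_add]))) le_rfl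

-- `MeasureTheory.MemLp.memLp_liftIoc` covers only `E = ℂ`.
theorem memLp_liftIoc {t : ℝ} {f : ℝ → E} (hf : MemLp f p (volume.restrict (Set.Ioc t (t + T)))) :
    MemLp (AddCircle.liftIoc T t f) p :=
  hf.comp_measurePreserving <|
    (measurePreserving_subtype_coe measurableSet_Ioc).comp (AddCircle.measurePreserving_equivIoc T)

theorem integral_eq_sum_setIntegral_translate [NormedSpace ℝ E] (hT : T = a * M)
    {f : AddCircle T → E} (hf : Integrable f) :
    ∫ y, f y = ∑ n ∈ range M, ∫ x in Set.Ioo 0 a, f (x + a * n : ℝ) := by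
  have ha : 0 < a := pos_of_mul_pos_left (hT ▸ Fact.out) M.cast_nonneg
  have hint : IntegrableOn (fun x : ℝ ↦ f x) (Set.Ioc 0 (0 + T)) :=
    (AddCircle.measurePreserving_mk T 0).integrable_comp_of_integrable hf
  have harc (n : ℕ) (hn : n < M) :
      IntervalIntegrable (fun x : ℝ ↦ f x) volume (a * n) (a * (n + 1 : ℕ)) := by
    have hn' : ((n + 1 : ℕ) : ℝ) ≤ M := by exact_mod_cast hn
    rw [intervalIntegrable_iff_integrableOn_Ioc_of_le (by gcongr; simp)]
    refine hint.mono_set (Set.Ioc_subset_Ioc (by positivity) ?_)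
    rw [zero_add, hT]
    gcongr
  calc ∫ y, f y = ∫ x in a * (0 : ℕ)..a * M, f x := by
        rw [← AddCircle.intervalIntegral_preimage T 0, zero_add, ← hT, Nat.cast_zero, mul_zero]
    _ = ∑ n ∈ range M, ∫ x in a * n..a * (n + 1 : ℕ), f x :=
        (intervalIntegral.sum_integral_adjacent_intervals harc).symm
    _ = ∑ n ∈ range M, ∫ x in Set.Ioo 0 a, f (x + a * n : ℝ) := by
        refine sum_congr rfl fun n _ ↦ ?_
        rw [← integral_Ioc_eq_integral_Ioo, ← intervalIntegral.integral_of_le ha.le,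
          intervalIntegral.integral_comp_add_right (fun x : ℝ ↦ f x), zero_add, Nat.cast_succ,
          mul_add_one, add_comm a]

theorem eq_of_add_mul_sub_mem_Ioo {x : ℝ} {m n : ℕ} (hx : x ∈ Set.Ioo 0 a)
    (hmn : x + a * n - a * m ∈ Set.Ioo 0 a) : m = n := by
  have ha : 0 < a := hx.1.trans hx.2
  have hlt : (m : ℝ) < n + 1 := lt_of_mul_lt_mul_left (by linarith [hx.2, hmn.1]) ha.le
  have hgt : (n : ℝ) < m + 1 := lt_of_mul_lt_mul_left (by linarith [hx.1, hmn.2]) ha.le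
  norm_cast at hlt hgt
  lia

theorem exists_memLp_forall_translate_eq (hT : T = a * M) {V : Fin M → ℝ → E}
    (hV : ∀ n, MemLp (V n) p (volume.restrict (Set.Ioo 0 a))) :
    ∃ h : AddCircle T → E, MemLp h p ∧
      ∀ n : Fin M, ∀ x ∈ Set.Ioo 0 a, h (x + a * n : ℝ) = V n x := by
  let H : ℝ → E := fun x ↦ ∑ n, (Set.Ioo 0 a).indicator (V n) (x - a * n)
  have hH : MemLp H p := memLp_finsetSum _ fun n _ ↦
    ((memLp_indicator_iff_restrict measurableSet_Ioo).2 (hV n)).comp_measurePreserving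
      (measurePreserving_sub_right volume (a * n))
  refine ⟨AddCircle.liftIoc T 0 H, memLp_liftIoc (hH.restrict _), fun n x hx ↦ ?_⟩
  have hmem : x + a * n ∈ Set.Ioc 0 (0 + T) := by
    have ha : 0 < a := hx.1.trans hx.2
    have hn : (n : ℝ) + 1 ≤ M := by exact_mod_cast n.isLt
    have hle : a * (n + 1) ≤ T := hT ▸ mul_le_mul_of_nonneg_left hn ha.le
    exact ⟨by linarith [hx.1, mul_nonneg ha.le n.val.cast_nonneg], by linarith [hx.2]⟩
  rw [AddCircle.liftIoc_coe_apply hmem]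
  calc H (x + a * n) = (Set.Ioo 0 a).indicator (V n) (x + a * n - a * n) :=
        sum_eq_single n (fun m _ hmn ↦ Set.indicator_of_notMem
          (fun hm ↦ hmn (Fin.ext (eq_of_add_mul_sub_mem_Ioo hx hm))) _) (by simp)
    _ = V n x := by rw [add_sub_cancel_right, Set.indicator_of_mem hx]

end Circle

theorem direct_sum_decomposition_unitary_general {𝕜 : Type*} [RCLike 𝕜] {T a : ℝ} [Fact (0 < T)]
    {M : ℕ} (hT : T = a * M) {K : ℕ → ℕ → 𝕜}
    (hK : (of fun j n : Fin M ↦ K j n) ∈ unitaryGroup (Fin M) 𝕜)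
    (U : (AddCircle T → 𝕜) → ℕ → ℝ → 𝕜)
    (hU : ∀ (h : AddCircle T → 𝕜) (j : ℕ) (x : ℝ),
      U h j x = ∑ n ∈ range M, K j n * h (x + a * n : ℝ)) :
    (∀ (c : 𝕜) (h₁ h₂ : AddCircle T → 𝕜) (j : ℕ) (x : ℝ),
      U (c • h₁ + h₂) j x = c * U h₁ j x + U h₂ j x) ∧
    (∀ h : AddCircle T → 𝕜, MemLp h 2 →
      (∀ j < M, MemLp (U h j) 2 (volume.restrict (Set.Ioo 0 a))) ∧
      ∑ j ∈ range M, ∫ x in Set.Ioo 0 a, ‖U h j x‖ ^ 2 = ∫ y, ‖h y‖ ^ 2) ∧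
    (∀ G : ℕ → ℝ → 𝕜, (∀ j < M, MemLp (G j) 2 (volume.restrict (Set.Ioo 0 a))) →
      ∃ h : AddCircle T → 𝕜, MemLp h 2 ∧
        ∀ j < M, U h j =ᵐ[volume.restrict (Set.Ioo 0 a)] G j) := by
  let A : Matrix (Fin M) (Fin M) 𝕜 := of fun j n ↦ K j n
  have hUA (h : AddCircle T → 𝕜) (j : Fin M) (x : ℝ) :
      U h j x = (A *ᵥ fun n : Fin M ↦ h (x + a * n : ℝ)) j := by
    rw [hU, sum_range]
    rfl
  have haT : a ≤ T := hT ▸ le_mul_natCast_of_pos (hT ▸ Fact.out)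
  refine ⟨fun c h₁ h₂ j x ↦ ?_, fun h hh ↦ ?_, fun G hG ↦ ?_⟩
  · simp only [hU, Pi.add_apply, Pi.smul_apply, smul_eq_mul, mul_add, sum_add_distrib, mul_sum,
      mul_left_comm]
  · have hpieces (n : Fin M) :
        MemLp (fun x : ℝ ↦ h (x + a * n : ℝ)) 2 (volume.restrict (Set.Ioo 0 a)) :=
      memLp_translate_restrict_Ioo haT hh _
    refine ⟨fun j hj ↦ ?_, ?_⟩
    · rw [funext (hUA h ⟨j, hj⟩)]
      exact memLp_mulVec A hpieces ⟨j, hj⟩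
    · rw [integral_eq_sum_setIntegral_translate hT (hh.integrable_norm_pow two_ne_zero), sum_range,
        sum_range]
      simp only [hUA]
      exact sum_integral_sq_norm_mulVec_of_mem_unitaryGroup hK hpieces
  · obtain ⟨h, hh, hpieces⟩ := exists_memLp_forall_translate_eq hT
      (memLp_mulVec (star A) fun k : Fin M ↦ hG k k.isLt)
    refine ⟨h, hh, fun j hj ↦ ?_⟩
    filter_upwards [ae_restrict_mem measurableSet_Ioo] with x hx
    rw [hUA h ⟨j, hj⟩, funext fun n ↦ hpieces n x hx]
    change (A *ᵥ star A *ᵥ fun k : Fin M ↦ G k x) ⟨j, hj⟩ = G j x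
    rw [mulVec_mulVec, mem_unitaryGroup_iff.1 hK, one_mulVec]

/-- The map `U` defined by `(U h)_j(x) = (2N)^{-1/2} Σ_{n<2N} e^{-iπjn/N} h(x + πn)`
is a unitary from `L²(𝕋_N)` onto `⊕_{j<2N} L²(0,π)`: it is linear, isometric, and
surjective. -/
theorem direct_sum_decomposition_unitary (N : ℕ) (hN : 0 < N)
    [Fact ((0 : ℝ) < 2 * Real.pi * N)]
    (U : (AddCircle (2 * Real.pi * (N : ℝ)) → ℂ) → ℕ → ℝ → ℂ)
    (hU : ∀ (h : AddCircle (2 * Real.pi * (N : ℝ)) → ℂ) (j : ℕ) (x : ℝ),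
      U h j x = ((Real.sqrt (2 * N))⁻¹ : ℝ) *
        ∑ n ∈ Finset.range (2 * N),
          Complex.exp (-(Complex.I * (Real.pi : ℂ) * (j : ℂ) * (n : ℂ)) / (N : ℂ)) *
            h ((x + Real.pi * n : ℝ) : AddCircle (2 * Real.pi * (N : ℝ)))) :
    -- `U` is linear
    (∀ (c : ℂ) (h₁ h₂ : AddCircle (2 * Real.pi * (N : ℝ)) → ℂ) (j : ℕ) (x : ℝ),
      U (c • h₁ + h₂) j x = c * U h₁ j x + U h₂ j x) ∧
    -- `U` is isometric from `L²(𝕋_N)` to `⊕_{j<2N} L²(0,π)`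
    (∀ h : AddCircle (2 * Real.pi * (N : ℝ)) → ℂ, MemLp h 2 volume →
      (∀ j < 2 * N, MemLp (U h j) 2 (volume.restrict (Set.Ioo 0 Real.pi))) ∧
      ∑ j ∈ Finset.range (2 * N), ∫ x in Set.Ioo 0 Real.pi, ‖U h j x‖ ^ 2
        = ∫ y, ‖h y‖ ^ 2 ∂(volume : Measure (AddCircle (2 * Real.pi * (N : ℝ))))) ∧
    -- `U` is surjective onto `⊕_{j<2N} L²(0,π)`
    (∀ G : ℕ → ℝ → ℂ,
      (∀ j < 2 * N, MemLp (G j) 2 (volume.restrict (Set.Ioo 0 Real.pi))) →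
      ∃ h : AddCircle (2 * Real.pi * (N : ℝ)) → ℂ, MemLp h 2 volume ∧
        ∀ j < 2 * N, U h j =ᵐ[volume.restrict (Set.Ioo 0 Real.pi)] G j) := by
  exact direct_sum_decomposition_unitary_general (by push_cast; ring)
    (of_dftKernel_mem_unitaryGroup (isPrimitiveRoot_exp_neg_I_mul_pi_div hN.ne')) U fun h j x ↦ by
      simp only [hU, mul_sum, dftKernel_exp_neg_I_mul_pi_div, mul_assoc]
end
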